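/- arXiv:2006.10418 — 2 statements merged into one kernel-verified Lean document; each statement's English description precedes it below -/
import Mathlib

section
/- Let R = K[t;δ] with δ an algebraic derivation of K, Const(δ) = F, minimum polynomial g of degree p^e, center F[x], x = g(t), and N the reduced norm of K(t;δ) over F(x). If f ∈ R has degree m, its minimal central left multiple ĥ ∈ F[x] has deg_x ĥ = m, and ĥ is irreducible in F[x], then f is irreducible in R; conversely, if f is irreducible (with deg ĥ = m) then N(f) is irreducible in F[x]. -/
/-!
Let `x` be a central element of `R = K[t;δ]` of degree `n` in `t`. As a left `K[x]`-module, `R` is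
free on `1, t, …, tⁿ⁻¹`, so right multiplication gives a multiplicative map `ρ` into the `n × n`
matrices over `K[x]`, with `N = det ∘ ρ`. Applying `δ` to the coefficients of `ρ f` yields the
commutator of `ρ t` and `ρ f`, so by Jacobi's formula `δ` kills the coefficients of `N f`: they lie
in `F`. Moreover `f` is a unit as soon as `N f` is, and `deg N f ≤ deg f`. If `ĥ(x)` is a left
multiple of `f` and `ĥ` is irreducible, then `N f` is a non-unit dividing `N (ĥ(x)) = ĥⁿ`, so
`deg ĥ = deg f` forces `N f` to be associated to `ĥ`; hence `N f`, and with it `f`, is irreducible.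
Conversely, `R` is a principal left ideal domain, so an irreducible `f` generates a maximal left
ideal. The contraction of that ideal to `F[x]` is prime, and `ĥ`, having minimal degree in it, is
irreducible.
-/

open Polynomial

section CommutativeAlgebra

theorem derivation_prod {R A ι : Type*} [CommSemiring R] [CommSemiring A] [Algebra R A]
    [DecidableEq ι] (D : Derivation R A A) (s : Finset ι) (f : ι → A) :
    D (∏ i ∈ s, f i) = ∑ i ∈ s, (∏ j ∈ s.erase i, f j) * D (f i) := by
  induction s using Finset.induction_on with
  | empty => simp
  | insert a s ha ih =>
    rw [Finset.prod_insert ha, D.leibniz, ih, Finset.sum_insert ha, Finset.erase_insert ha,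
      smul_eq_mul, smul_eq_mul, add_comm, Finset.mul_sum]
    congr 1
    refine Finset.sum_congr rfl fun i hi => ?_
    have hai : a ≠ i := fun h => ha (h ▸ hi)
    rw [Finset.erase_insert_of_ne hai, Finset.prod_insert (by simp [ha]), mul_assoc]

theorem derivation_det {R A n : Type*} [CommRing R] [CommRing A] [Algebra R A] [Fintype n]
    [DecidableEq n] (D : Derivation R A A) (M : Matrix n n A) :
    D M.det = (M.adjugate * M.map D).trace := by
  have det_updateCol (i : n) : (M.updateCol i ((M.map D).col i)).det =
      ∑ σ : Equiv.Perm n, (σ.sign : ℤ) •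
        ((∏ j ∈ Finset.univ.erase i, M (σ j) j) * D (M (σ i) i)) := by
    rw [Matrix.det_apply]
    refine Finset.sum_congr rfl fun σ _ => ?_
    rw [← Finset.prod_erase_mul _ _ (Finset.mem_univ i), Matrix.updateCol_self]
    congr 2
    refine Finset.prod_congr rfl fun j hj => ?_
    rw [Matrix.updateCol_ne (Finset.ne_of_mem_erase hj)]
  calc D M.det = ∑ i, (M.updateCol i ((M.map D).col i)).det := by
        simp only [det_updateCol, Matrix.det_apply, map_sum, derivation_prod, Units.smul_def,
          map_zsmul, Finset.smul_sum]
        exact Finset.sum_comm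
    _ = (M.adjugate * M.map D).trace := by
        refine Finset.sum_congr rfl fun i _ => ?_
        rw [← Matrix.cramer_apply, Matrix.cramer_eq_adjugate_mulVec]
        rfl

theorem derivation_det_eq_zero_of_map_eq_commutator {R A n : Type*} [CommRing R] [CommRing A]
    [Algebra R A] [Fintype n] [DecidableEq n] (D : Derivation R A A) {M B : Matrix n n A}
    (h : M.map D = B * M - M * B) : D M.det = 0 := by
  rw [derivation_det, h, mul_sub, Matrix.trace_sub, ← mul_assoc, Matrix.trace_mul_comm,
    ← mul_assoc, ← mul_assoc, Matrix.mul_adjugate, Matrix.adjugate_mul, sub_self]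

/-- The coefficientwise extension of a derivation of `A` to `A[X]`, with `X` a constant. -/
noncomputable def coeffDerivation {R A : Type*} [CommRing R] [CommRing A] [Algebra R A]
    (D : Derivation R A A) : Derivation R A[X] A[X] :=
  PolynomialModule.equivPolynomialSelf.compDer D.mapCoeffs

section coeffDerivation

variable {R A : Type*} [CommRing R] [CommRing A] [Algebra R A] (D : Derivation R A A)

@[simp]
theorem coeff_coeffDerivation (p : A[X]) (i : ℕ) :
    (coeffDerivation D p).coeff i = D (p.coeff i) := rfl

@[simp]
theorem coeffDerivation_monomial (i : ℕ) (a : A) :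
    coeffDerivation D (monomial i a) = monomial i (D a) := by
  ext j
  simp [coeff_monomial, apply_ite D]

theorem degree_coeffDerivation_lt_degree_mul_X {p : A[X]} (hp : p ≠ 0) :
    (coeffDerivation D p).degree < (p * X).degree := by
  refine lt_of_le_of_lt ((degree_le_iff_coeff_zero _ _).2 fun i hi => ?_)
    (degree_lt_degree_mul_X hp)
  rw [coeff_coeffDerivation, coeff_eq_zero_of_degree_lt hi, map_zero]

@[simp]
theorem coeffDerivation_map_algebraMap (p : R[X]) :
    coeffDerivation D (p.map (algebraMap R A)) = 0 := by
  ext i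
  simp

end coeffDerivation

/-- Assigning weight `w i` to the `i`-th row and `-w i` to the `i`-th column, the weights cancel
in each term of the Leibniz expansion. -/
theorem natDegree_det_le_of_weights {R n : Type*} [CommRing R] [Fintype n] [DecidableEq n]
    {M : Matrix n n R[X]} (w : n → ℕ) {m : ℕ}
    (h : ∀ i j, M i j ≠ 0 → Fintype.card n * (M i j).natDegree + w j ≤ w i + m) :
    M.det.natDegree ≤ m := by
  cases isEmpty_or_nonempty n
  · simp
  rw [Matrix.det_apply]
  refine natDegree_sum_le_of_forall_le _ _ fun σ _ => (natDegree_smul_le _ _).trans ?_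
  by_cases hσ : ∃ i, M (σ i) i = 0
  · obtain ⟨i, hi⟩ := hσ
    have hprod : ∏ i, M (σ i) i = 0 := Finset.prod_eq_zero (Finset.mem_univ i) hi
    exact hprod ▸ natDegree_zero.trans_le m.zero_le
  push Not at hσ
  have hsum : ∑ i, (Fintype.card n * (M (σ i) i).natDegree + w i) ≤ ∑ i, (w (σ i) + m) :=
    Finset.sum_le_sum fun i _ => h _ _ (hσ i)
  rw [Finset.sum_add_distrib, Finset.sum_add_distrib, ← Finset.mul_sum, Equiv.sum_comp σ w,
    add_comm, add_le_add_iff_left, Finset.sum_const, Finset.card_univ, smul_eq_mul] at hsum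
  exact (natDegree_prod_le _ _).trans (Nat.le_of_mul_le_mul_left hsum Fintype.card_pos)

theorem degree_sum_support_of_strictMono {R S : Type*} [Semiring R] [Semiring S] {q : R[X]}
    (hq : q ≠ 0) {f : ℕ → S[X]} {d : ℕ → ℕ} (hd : StrictMono d)
    (hf : ∀ i ∈ q.support, (f i).degree = d i) :
    (∑ i ∈ q.support, f i).degree = d q.natDegree := by
  rw [degree_sum_eq_of_disjoint]
  · refine le_antisymm (Finset.sup_le fun i hi => ?_) ?_
    · rw [hf i hi]
      exact_mod_cast hd.monotone (le_natDegree_of_mem_supp i hi)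
    · rw [← hf _ (natDegree_mem_support_of_nonzero hq)]
      exact Finset.le_sup (f := fun i => (f i).degree) (natDegree_mem_support_of_nonzero hq)
  · intro i hi j hj hij hdeg
    simp only [Function.comp_apply, hf i hi.1, hf j hj.1] at hdeg
    exact hij (hd.injective (by exact_mod_cast hdeg))

theorem irreducible_of_natDegree_minimal {k : Type*} [Field k] {I : Ideal k[X]} [I.IsPrime]
    {h : k[X]} (h0 : h ≠ 0) (hI : h ∈ I)
    (hmin : ∀ c ∈ I, c ≠ 0 → h.natDegree ≤ c.natDegree) : Irreducible h := by
  have isUnit_cofactor {a b : k[X]} (hab : h = a * b) (ha : a ∈ I) : IsUnit b := by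
    have ha0 : a ≠ 0 := left_ne_zero_of_mul (hab ▸ h0)
    have hb0 : b ≠ 0 := right_ne_zero_of_mul (hab ▸ h0)
    have hdeg := hmin a ha ha0
    rw [hab, natDegree_mul ha0 hb0] at hdeg
    rw [isUnit_iff_degree_eq_zero, degree_eq_natDegree hb0]
    exact_mod_cast (by lia : b.natDegree = 0)
  refine ⟨fun hu => Ideal.IsPrime.ne_top ‹_› (I.eq_top_of_isUnit_mem hI hu), fun a b hab => ?_⟩
  rcases Ideal.IsPrime.mem_or_mem ‹_› (hab ▸ hI) with ha | hb
  · exact .inr (isUnit_cofactor hab ha)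
  · exact .inl (isUnit_cofactor (hab.trans (mul_comm a b)) hb)

end CommutativeAlgebra

section LeftIdeals

variable {R : Type*} [Ring R]

theorem span_singleton_isMaximal_of_irreducible [IsDomain R] [IsPrincipalIdealRing R] {f : R}
    (hf : Irreducible f) : (Ideal.span {f}).IsMaximal := by
  refine ⟨fun htop => ?_, fun J hJ => ?_⟩
  · obtain ⟨a, ha⟩ := Ideal.mem_span_singleton'.1 (htop ▸ Submodule.mem_top : (1 : R) ∈ _)
    exact hf.not_isUnit (.of_mul_eq_one_right a ha)
  · obtain ⟨d, rfl⟩ := (IsPrincipalIdealRing.principal J).principal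
    obtain ⟨u, rfl⟩ := Ideal.mem_span_singleton'.1 (hJ.le (Ideal.mem_span_singleton_self f))
    rcases hf.isUnit_or_isUnit rfl with hu | hd
    · obtain ⟨v, hv⟩ := hu.exists_left_inv
      refine absurd ((Ideal.span_singleton_le_iff_mem _).2 ?_) hJ.not_ge
      exact Ideal.mem_span_singleton'.2 ⟨v, by rw [← mul_assoc, hv, one_mul]⟩
    · exact Ideal.eq_top_of_isUnit_mem _ (Ideal.mem_span_singleton_self d) hd

theorem comap_isPrime_of_isMaximal {A : Type*} [CommRing A] (Q : A →+* R)
    (hQ : ∀ a, Q a ∈ Subring.center R) (M : Ideal R) [hM : M.IsMaximal] :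
    (M.comap Q).IsPrime := by
  refine ⟨Ideal.comap_ne_top Q hM.ne_top, fun {a b} hab => or_iff_not_imp_left.2 fun ha => ?_⟩
  obtain ⟨r, m, hm, hr⟩ := Ideal.IsMaximal.exists_inv hM ha
  have hb : Q b = r * Q (a * b) + Q b * m := by
    rw [map_mul, ← mul_assoc, Subring.mem_center_iff.1 (hQ b) (r * Q a), ← mul_add, hr, mul_one]
  rw [Ideal.mem_comap, hb]
  exact M.add_mem (M.mul_mem_left r hab) (M.mul_mem_left _ hm)

end LeftIdeals

/-- `R` is the differential polynomial ring `K[t;δ]`, with `K` embedded by `ι`: the map `φ` reads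
off left coefficients, sending `∑ aᵢ tⁱ` to the commutative polynomial `∑ aᵢ Xⁱ`, so that
`(φ r).degree` is the degree of `r` in `t`. -/
structure IsDifferentialPolynomialRing {F K R : Type*} [CommRing F] [CommRing K] [Algebra F K]
    [Ring R] (δ : Derivation F K K) (ι : K →+* R) (t : R) (φ : R ≃+ K[X]) : Prop where
  t_mul (a : K) : t * ι a = ι a * t + ι (δ a)
  map_monomial (a : K) (i : ℕ) : φ (ι a * t ^ i) = monomial i a

namespace IsDifferentialPolynomialRing

section Ring

variable {F K R : Type*} [CommRing F] [CommRing K] [Algebra F K] [Ring R]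
  {δ : Derivation F K K} {ι : K →+* R} {t : R} {φ : R ≃+ K[X]}

theorem eq_sum (h : IsDifferentialPolynomialRing δ ι t φ) (r : R) :
    r = ∑ i ∈ (φ r).support, ι ((φ r).coeff i) * t ^ i := by
  apply φ.injective
  rw [map_sum]
  simp only [h.map_monomial]
  exact (φ r).as_sum_support

theorem induction_on (h : IsDifferentialPolynomialRing δ ι t φ) {motive : R → Prop} (r : R)
    (add : ∀ r s, motive r → motive s → motive (r + s))
    (monomial : ∀ a i, motive (ι a * t ^ i)) : motive r := by
  rw [← φ.symm_apply_apply r]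
  induction φ r using Polynomial.induction_on' with
  | add p q hp hq => exact map_add φ.symm p q ▸ add _ _ hp hq
  | monomial i a => simpa only [φ.symm_apply_eq.2 (h.map_monomial a i).symm] using monomial a i

theorem mem_center_of_commute (h : IsDifferentialPolynomialRing δ ι t φ) {z : R}
    (hι : ∀ a, Commute (ι a) z) (ht : Commute t z) : z ∈ Subring.center R := by
  refine Subring.mem_center_iff.2 fun r => ?_
  induction r using h.induction_on with
  | add r s hr hs => rw [add_mul, mul_add, hr, hs]
  | monomial a i => exact ((hι a).mul_left (ht.pow_left i)).eq

theorem map_t_pow (h : IsDifferentialPolynomialRing δ ι t φ) (i : ℕ) : φ (t ^ i) = X ^ i := by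
  simpa [← monomial_one_right_eq_X_pow] using h.map_monomial 1 i

protected theorem map_one (h : IsDifferentialPolynomialRing δ ι t φ) : φ 1 = 1 := by
  simpa using h.map_t_pow 0

theorem map_ι_mul (h : IsDifferentialPolynomialRing δ ι t φ) (a : K) (r : R) :
    φ (ι a * r) = C a * φ r := by
  induction r using h.induction_on with
  | add r s hr hs => rw [mul_add, map_add, map_add, mul_add, hr, hs]
  | monomial b i =>
    rw [← mul_assoc, ← map_mul, h.map_monomial, h.map_monomial, C_mul_monomial]

theorem map_t_mul (h : IsDifferentialPolynomialRing δ ι t φ) (r : R) :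
    φ (t * r) = φ r * X + coeffDerivation δ (φ r) := by
  induction r using h.induction_on with
  | add r s hr hs => rw [mul_add, map_add, map_add, add_mul, map_add, hr, hs]; abel
  | monomial b i =>
    rw [← mul_assoc, h.t_mul, add_mul, mul_assoc, ← pow_succ', map_add, h.map_monomial,
      h.map_monomial, h.map_monomial, coeffDerivation_monomial, monomial_mul_X]

theorem leadingCoeff_map_t_mul (h : IsDifferentialPolynomialRing δ ι t φ) (r : R) :
    (φ (t * r)).leadingCoeff = (φ r).leadingCoeff := by
  rcases eq_or_ne (φ r) 0 with hr | hr
  · simp [h.map_t_mul, hr]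
  · rw [h.map_t_mul, leadingCoeff_add_of_degree_lt' (degree_coeffDerivation_lt_degree_mul_X δ hr),
      leadingCoeff_mul_X]

theorem leadingCoeff_map_t_pow_mul (h : IsDifferentialPolynomialRing δ ι t φ) (i : ℕ) (r : R) :
    (φ (t ^ i * r)).leadingCoeff = (φ r).leadingCoeff := by
  induction i with
  | zero => simp
  | succ i ih => rw [pow_succ', mul_assoc, h.leadingCoeff_map_t_mul, ih]

variable [Nontrivial K]

theorem degree_map_t_mul (h : IsDifferentialPolynomialRing δ ι t φ) (r : R) :
    (φ (t * r)).degree = (φ r).degree + 1 := by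
  rcases eq_or_ne (φ r) 0 with hr | hr
  · simp [h.map_t_mul, hr]
  · rw [h.map_t_mul, degree_add_eq_left_of_degree_lt (degree_coeffDerivation_lt_degree_mul_X δ hr),
      degree_mul_X]

theorem degree_map_t_pow_mul (h : IsDifferentialPolynomialRing δ ι t φ) (i : ℕ) (r : R) :
    (φ (t ^ i * r)).degree = (φ r).degree + i := by
  induction i with
  | zero => simp
  | succ i ih => rw [pow_succ', mul_assoc, h.degree_map_t_mul, ih, Nat.cast_succ, add_assoc]

end Ring

section Domain

variable {F K R : Type*} [CommRing F] [CommRing K] [IsDomain K] [Algebra F K] [Ring R]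
  {δ : Derivation F K K} {ι : K →+* R} {t : R} {φ : R ≃+ K[X]}

theorem degree_map_mul (h : IsDifferentialPolynomialRing δ ι t φ) (r s : R) :
    (φ (r * s)).degree = (φ r).degree + (φ s).degree := by
  rcases eq_or_ne (φ r) 0 with hr | hr
  · rw [hr, (map_eq_zero_iff φ φ.injective).1 hr, zero_mul, map_zero, degree_zero, WithBot.bot_add]
  rcases eq_or_ne (φ s) 0 with hs | hs
  · rw [hs, (map_eq_zero_iff φ φ.injective).1 hs, mul_zero, map_zero, degree_zero, WithBot.add_bot]
  have map_mul_eq_sum : φ (r * s) =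
      ∑ i ∈ (φ r).support, C ((φ r).coeff i) * φ (t ^ i * s) := by
    conv_lhs => rw [h.eq_sum r, Finset.sum_mul, map_sum]
    simp only [mul_assoc, h.map_ι_mul]
  rw [map_mul_eq_sum, degree_sum_support_of_strictMono hr
    (d := fun i => i + (φ s).natDegree) (fun _ _ hij => Nat.add_lt_add_right hij _)]
  · rw [degree_eq_natDegree hr, degree_eq_natDegree hs, Nat.cast_add]
  · intro i hi
    rw [degree_C_mul (mem_support_iff.1 hi), h.degree_map_t_pow_mul, degree_eq_natDegree hs,
      add_comm, Nat.cast_add]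

theorem isDomain (h : IsDifferentialPolynomialRing δ ι t φ) : IsDomain R := by
  have : Nontrivial R := φ.toEquiv.nontrivial
  have : NoZeroDivisors R := ⟨fun {r s} hrs => by
    have hdeg := h.degree_map_mul r s
    rw [hrs, map_zero, degree_zero, eq_comm, WithBot.add_eq_bot, degree_eq_bot, degree_eq_bot]
      at hdeg
    simpa only [map_eq_zero_iff φ φ.injective] using hdeg⟩
  exact NoZeroDivisors.to_isDomain R

theorem natDegree_map_eq_zero_of_isUnit (h : IsDifferentialPolynomialRing δ ι t φ) {r : R}
    (hr : IsUnit r) : (φ r).natDegree = 0 := by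
  obtain ⟨s, hs⟩ := hr.exists_right_inv
  have hdeg := h.degree_map_mul r s
  rw [hs, h.map_one, degree_one, eq_comm, Nat.WithBot.add_eq_zero_iff] at hdeg
  exact natDegree_eq_of_degree_eq_some hdeg.1

theorem degree_map_pow (h : IsDifferentialPolynomialRing δ ι t φ) (r : R) (k : ℕ) :
    (φ (r ^ k)).degree = k • (φ r).degree := by
  induction k with
  | zero => rw [pow_zero, h.map_one, degree_one, zero_nsmul]
  | succ k ih => rw [pow_succ, h.degree_map_mul, ih, succ_nsmul]

end Domain

section Field

variable {F K R : Type*} [CommRing F] [Field K] [Algebra F K] [Ring R]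
  {δ : Derivation F K K} {ι : K →+* R} {t : R} {φ : R ≃+ K[X]}

theorem exists_degree_map_sub_mul_lt (h : IsDifferentialPolynomialRing δ ι t φ) {r d : R}
    (hd : d ≠ 0) (hdeg : (φ d).degree ≤ (φ r).degree) :
    ∃ q, (φ (r - q * d)).degree < (φ r).degree := by
  have hφd : φ d ≠ 0 := (map_ne_zero_iff φ φ.injective).2 hd
  have hφr : φ r ≠ 0 := fun h0 => hφd (by simpa [h0] using hdeg)
  have hlc : (φ r).leadingCoeff / (φ d).leadingCoeff ≠ 0 :=
    div_ne_zero (leadingCoeff_ne_zero.2 hφr) (leadingCoeff_ne_zero.2 hφd)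
  refine ⟨ι ((φ r).leadingCoeff / (φ d).leadingCoeff) *
    t ^ ((φ r).natDegree - (φ d).natDegree), ?_⟩
  rw [map_sub, mul_assoc, h.map_ι_mul]
  refine degree_sub_lt_left ?_ hφr ?_
  · rw [degree_C_mul hlc, h.degree_map_t_pow_mul, degree_eq_natDegree hφr, degree_eq_natDegree hφd,
      ← Nat.cast_add, Nat.add_sub_cancel' (natDegree_le_natDegree hdeg)]
  · rw [leadingCoeff_mul, leadingCoeff_C, h.leadingCoeff_map_t_pow_mul,
      div_mul_cancel₀ _ (leadingCoeff_ne_zero.2 hφd)]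

theorem isPrincipalIdealRing (h : IsDifferentialPolynomialRing δ ι t φ) :
    IsPrincipalIdealRing R := by
  refine ⟨fun I => ?_⟩
  rcases eq_or_ne I ⊥ with rfl | hI
  · exact bot_isPrincipal
  have hne : {r | r ∈ I ∧ r ≠ 0}.Nonempty := I.ne_bot_iff.1 hI
  have hwf : WellFounded (Function.onFun (· < ·) fun r => (φ r).degree) :=
    InvImage.wf _ wellFounded_lt
  obtain ⟨d, ⟨hdI, hd⟩, hmin⟩ := hwf.has_min _ hne
  refine ⟨d, le_antisymm (fun r hr => ?_) ((Ideal.span_singleton_le_iff_mem I).2 hdI)⟩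
  induction r using hwf.induction with | _ r ih => ?_
  rcases eq_or_ne r 0 with rfl | hr0
  · exact zero_mem _
  obtain ⟨q, hq⟩ := h.exists_degree_map_sub_mul_lt hd (not_lt.1 (hmin r ⟨hr, hr0⟩))
  have hqd : q * d ∈ Ideal.span {d} := Ideal.mul_mem_left _ q (Ideal.mem_span_singleton_self d)
  rw [← sub_add_cancel r (q * d)]
  exact add_mem (ih _ hq (I.sub_mem hr (I.mul_mem_left q hdI))) hqd

end Field

end IsDifferentialPolynomialRing

section CentralElement

variable {K R : Type*} [CommRing K] [Ring R] (ι : K →+* R) (t : R) {x : R}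

/-- Evaluation of polynomials over `K`, with coefficients on the left, at a central element `x`. -/
noncomputable def centralEval (hx : x ∈ Subring.center R) : K[X] →+* R :=
  eval₂RingHom' ι x fun a => Subring.mem_center_iff.1 hx (ι a)

theorem centralEval_apply (hx : x ∈ Subring.center R) (q : K[X]) :
    centralEval ι hx q = q.sum fun i a => ι a * x ^ i :=
  eval₂_eq_sum

theorem centralEval_map {F : Type*} [CommRing F] (g : F →+* K) (hx : x ∈ Subring.center R)
    (q : F[X]) : centralEval ι hx (q.map g) = q.sum fun i a => ι (g a) * x ^ i :=
  (eval₂_map g ι x).trans eval₂_eq_sum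

/-- The element of `R` with coordinates `v` with respect to the powers `1, t, …, tⁿ⁻¹`, where `K[X]`
acts on the left through `centralEval`. -/
noncomputable def ofCoordinates (hx : x ∈ Subring.center R) {n : ℕ} : (Fin n → K[X]) →+ R where
  toFun v := ∑ j, centralEval ι hx (v j) * t ^ (j : ℕ)
  map_zero' := by simp
  map_add' v w := by simp [add_mul, Finset.sum_add_distrib]

theorem ofCoordinates_apply (hx : x ∈ Subring.center R) {n : ℕ} (v : Fin n → K[X]) :
    ofCoordinates ι t hx v = ∑ j, centralEval ι hx (v j) * t ^ (j : ℕ) :=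
  rfl

theorem ofCoordinates_single (hx : x ∈ Subring.center R) {n : ℕ} (i : Fin n) (q : K[X]) :
    ofCoordinates ι t hx (Pi.single i q) = centralEval ι hx q * t ^ (i : ℕ) := by
  rw [ofCoordinates_apply, Finset.sum_eq_single_of_mem i (Finset.mem_univ i), Pi.single_eq_same]
  intro j _ hj
  rw [Pi.single_eq_of_ne hj, map_zero, zero_mul]

end CentralElement

namespace IsDifferentialPolynomialRing

section Ring

variable {F K R : Type*} [CommRing F] [CommRing K] [Algebra F K] [Ring R]
  {δ : Derivation F K K} {ι : K →+* R} {t : R} {φ : R ≃+ K[X]} {x : R}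

theorem t_mul_centralEval (h : IsDifferentialPolynomialRing δ ι t φ)
    (hx : x ∈ Subring.center R) (q : K[X]) :
    t * centralEval ι hx q =
      centralEval ι hx q * t + centralEval ι hx (coeffDerivation δ q) := by
  induction q using Polynomial.induction_on' with
  | add p q hp hq =>
    simp only [map_add, mul_add, add_mul, hp, hq]
    abel
  | monomial i a =>
    have hxi : t * x ^ i = x ^ i * t := Subring.mem_center_iff.1 (pow_mem hx i) t
    have centralEval_monomial (b : K) : centralEval ι hx (monomial i b) = ι b * x ^ i :=
      eval₂_monomial ι x
    rw [coeffDerivation_monomial, centralEval_monomial, centralEval_monomial, ← mul_assoc, h.t_mul,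
      add_mul, mul_assoc, hxi, mul_assoc]

theorem centralEval_map_mem_center (h : IsDifferentialPolynomialRing δ ι t φ)
    (hx : x ∈ Subring.center R) (q : F[X]) :
    centralEval ι hx (q.map (algebraMap F K)) ∈ Subring.center R := by
  refine h.mem_center_of_commute (fun a => ?_) ?_
  · have hC : centralEval ι hx (C a) = ι a := eval₂_C ι x
    exact hC ▸ (Commute.all (C a) _).map (centralEval ι hx)
  · exact (h.t_mul_centralEval hx _).trans (by simp)

theorem t_mul_ofCoordinates (h : IsDifferentialPolynomialRing δ ι t φ)
    (hx : x ∈ Subring.center R) {n : ℕ} (v : Fin n → K[X]) :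
    t * ofCoordinates ι t hx v =
      ofCoordinates ι t hx v * t + ofCoordinates ι t hx (coeffDerivation δ ∘ v) := by
  simp only [ofCoordinates_apply, Finset.mul_sum, Finset.sum_mul, ← Finset.sum_add_distrib]
  refine Finset.sum_congr rfl fun j _ => ?_
  rw [← mul_assoc, h.t_mul_centralEval, add_mul, mul_assoc, mul_assoc, ← pow_succ, ← pow_succ',
    Function.comp_apply]

end Ring

section Domain

variable {F K R : Type*} [CommRing F] [CommRing K] [IsDomain K] [Algebra F K] [Ring R]
  {δ : Derivation F K K} {ι : K →+* R} {t : R} {φ : R ≃+ K[X]} {x : R} {n : ℕ}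

theorem degree_map_centralEval [NeZero n] (h : IsDifferentialPolynomialRing δ ι t φ)
    (hx : x ∈ Subring.center R) (hdeg : (φ x).degree = n) {q : K[X]} (hq : q ≠ 0) :
    (φ (centralEval ι hx q)).degree = (n * q.natDegree : ℕ) := by
  rw [centralEval_apply, Polynomial.sum, map_sum]
  refine degree_sum_support_of_strictMono hq
    (fun i j hij => Nat.mul_lt_mul_of_pos_left hij (NeZero.pos n)) fun i hi => ?_
  rw [h.map_ι_mul, degree_C_mul (mem_support_iff.1 hi), h.degree_map_pow, hdeg, nsmul_eq_mul,
    mul_comm, Nat.cast_mul]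

theorem centralEval_injective [NeZero n] (h : IsDifferentialPolynomialRing δ ι t φ)
    (hx : x ∈ Subring.center R) (hdeg : (φ x).degree = n) :
    Function.Injective (centralEval ι hx) := by
  refine (injective_iff_map_eq_zero _).2 fun q hq => ?_
  by_contra hq0
  have hφ := h.degree_map_centralEval hx hdeg hq0
  rw [hq, map_zero, degree_zero] at hφ
  exact WithBot.bot_ne_natCast _ hφ

theorem natDegree_map_centralEval [NeZero n] (h : IsDifferentialPolynomialRing δ ι t φ)
    (hx : x ∈ Subring.center R) (hdeg : (φ x).degree = n) (q : K[X]) :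
    (φ (centralEval ι hx q)).natDegree = n * q.natDegree := by
  rcases eq_or_ne q 0 with rfl | hq
  · simp
  · exact natDegree_eq_of_degree_eq_some (h.degree_map_centralEval hx hdeg hq)

theorem le_degree_map_ofCoordinates (h : IsDifferentialPolynomialRing δ ι t φ)
    (hx : x ∈ Subring.center R) (hdeg : (φ x).degree = n) {v : Fin n → K[X]} {j : Fin n}
    (hj : v j ≠ 0) :
    ((n * (v j).natDegree + j : ℕ) : WithBot ℕ) ≤ (φ (ofCoordinates ι t hx v)).degree := by
  have : NeZero n := .of_pos j.pos
  have degree_term {i : Fin n} (hi : v i ≠ 0) :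
      (φ (centralEval ι hx (v i) * t ^ (i : ℕ))).degree = (n * (v i).natDegree + i : ℕ) := by
    rw [h.degree_map_mul, h.degree_map_centralEval hx hdeg hi, h.map_t_pow, degree_X_pow,
      Nat.cast_add]
  rw [ofCoordinates_apply, map_sum, degree_sum_eq_of_disjoint, ← degree_term hj]
  · exact Finset.le_sup (f := fun i => (φ (centralEval ι hx (v i) * t ^ (i : ℕ))).degree)
      (Finset.mem_univ j)
  · have ne_zero {i : Fin n} (hi : φ (centralEval ι hx (v i) * t ^ (i : ℕ)) ≠ 0) : v i ≠ 0 :=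
      fun h0 => hi (by rw [h0, map_zero, zero_mul, map_zero])
    intro i hi k hk hik hdeg'
    simp only [Function.comp_apply, degree_term (ne_zero hi.2), degree_term (ne_zero hk.2),
      Nat.cast_inj] at hdeg'
    have hmod := congrArg (· % n) hdeg'
    simp only [Nat.mul_add_mod, Nat.mod_eq_of_lt i.isLt, Nat.mod_eq_of_lt k.isLt] at hmod
    exact hik (Fin.ext hmod)

theorem ofCoordinates_injective (h : IsDifferentialPolynomialRing δ ι t φ)
    (hx : x ∈ Subring.center R) (hdeg : (φ x).degree = n) :
    Function.Injective (ofCoordinates ι t hx (n := n)) := by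
  refine (injective_iff_map_eq_zero _).2 fun v hv => funext fun j => ?_
  by_contra hj
  have hle := h.le_degree_map_ofCoordinates hx hdeg hj
  rw [hv, map_zero, degree_zero, le_bot_iff] at hle
  exact WithBot.natCast_ne_bot _ hle

end Domain

end IsDifferentialPolynomialRing

/-- `ρ` represents right multiplication on `R = K[t;δ]`, viewed as a left `K[x]`-module on the
basis `1, t, …, tⁿ⁻¹`, where `x` is a central element of degree `n` in `t`: row `i` of `ρ r` holds
the coordinates of `tⁱ r`. -/
structure IsRightRegularRep {F K R : Type*} [CommRing F] [CommRing K] [Algebra F K] [Ring R]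
    (δ : Derivation F K K) (ι : K →+* R) (t : R) (φ : R ≃+ K[X]) {x : R}
    (hx : x ∈ Subring.center R) {n : ℕ} (ρ : R → Matrix (Fin n) (Fin n) K[X]) : Prop
    extends IsDifferentialPolynomialRing δ ι t φ where
  degree_map : (φ x).degree = n
  t_pow_mul (r : R) (i : Fin n) : t ^ (i : ℕ) * r = ofCoordinates ι t hx (ρ r i)

namespace IsRightRegularRep

section Ring

variable {F K R : Type*} [CommRing F] [CommRing K] [Algebra F K] [Ring R]
  {δ : Derivation F K K} {ι : K →+* R} {t : R} {φ : R ≃+ K[X]} {x : R}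
  {hx : x ∈ Subring.center R} {n : ℕ} {ρ : R → Matrix (Fin n) (Fin n) K[X]}

theorem ofCoordinates_mul (h : IsRightRegularRep δ ι t φ hx ρ) (v : Fin n → K[X]) (r : R) :
    ofCoordinates ι t hx v * r = ofCoordinates ι t hx (Matrix.vecMul v (ρ r)) := by
  simp only [ofCoordinates_apply, Finset.sum_mul, mul_assoc, h.t_pow_mul, Finset.mul_sum,
    Matrix.vecMul, dotProduct, map_sum, map_mul]
  exact Finset.sum_comm

end Ring

section Domain

variable {F K R : Type*} [CommRing F] [CommRing K] [IsDomain K] [Algebra F K] [Ring R]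
  {δ : Derivation F K K} {ι : K →+* R} {t : R} {φ : R ≃+ K[X]} {x : R}
  {hx : x ∈ Subring.center R} {n : ℕ} {ρ : R → Matrix (Fin n) (Fin n) K[X]}

theorem eq_of_t_pow_mul (h : IsRightRegularRep δ ι t φ hx ρ) {r : R}
    {M : Matrix (Fin n) (Fin n) K[X]}
    (hM : ∀ i : Fin n, t ^ (i : ℕ) * r = ofCoordinates ι t hx (M i)) : ρ r = M :=
  funext fun i => h.ofCoordinates_injective hx h.degree_map ((h.t_pow_mul r i).symm.trans (hM i))

protected theorem map_mul (h : IsRightRegularRep δ ι t φ hx ρ) (r s : R) :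
    ρ (r * s) = ρ r * ρ s := by
  refine h.eq_of_t_pow_mul fun i => ?_
  rw [← mul_assoc, h.t_pow_mul, h.ofCoordinates_mul, Matrix.mul_apply_eq_vecMul]

theorem map_centralEval_map (h : IsRightRegularRep δ ι t φ hx ρ) (q : F[X]) :
    ρ (centralEval ι hx (q.map (algebraMap F K))) =
      Matrix.scalar (Fin n) (q.map (algebraMap F K)) := by
  refine h.eq_of_t_pow_mul fun i => ?_
  rw [Subring.mem_center_iff.1 (h.centralEval_map_mem_center hx q), ← ofCoordinates_single]
  exact congrArg _ (Matrix.row_diagonal (fun _ => q.map (algebraMap F K)) i).symm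

theorem map_coeffDerivation (h : IsRightRegularRep δ ι t φ hx ρ) (r : R) :
    (ρ r).map (coeffDerivation δ) = ρ t * ρ r - ρ r * ρ t := by
  refine funext fun i => h.ofCoordinates_injective hx h.degree_map ?_
  have hrow := h.t_mul_ofCoordinates hx (ρ r i)
  rw [h.ofCoordinates_mul, ← h.t_pow_mul, ← mul_assoc, ← pow_succ', pow_succ, mul_assoc,
    h.t_pow_mul, h.map_mul, ← sub_eq_iff_eq_add', ← map_sub] at hrow
  exact hrow.symm

theorem isUnit_of_isUnit_det [NeZero n] (h : IsRightRegularRep δ ι t φ hx ρ) {r : R}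
    (hr : IsUnit (ρ r).det) : IsUnit r := by
  have := h.isDomain
  have left_inv : ofCoordinates ι t hx ((ρ r)⁻¹ 0) * r = 1 := by
    have row_zero : (1 : Matrix (Fin n) (Fin n) K[X]) 0 = Pi.single 0 1 :=
      Matrix.row_diagonal (fun _ => 1) 0
    rw [h.ofCoordinates_mul, ← Matrix.mul_apply_eq_vecMul, Matrix.nonsing_inv_mul _ hr, row_zero,
      ofCoordinates_single, map_one, one_mul, Fin.val_zero, pow_zero]
  exact .of_mul_eq_one_right _ left_inv

theorem natDegree_det_le (h : IsRightRegularRep δ ι t φ hx ρ) (r : R) :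
    (ρ r).det.natDegree ≤ (φ r).natDegree := by
  refine natDegree_det_le_of_weights (fun i : Fin n => (i : ℕ)) fun i j hij => ?_
  have hle := h.le_degree_map_ofCoordinates hx h.degree_map hij
  rw [← h.t_pow_mul, h.degree_map_t_pow_mul] at hle
  have hr : φ r ≠ 0 := fun h0 => by
    rw [h0, degree_zero, WithBot.bot_add, le_bot_iff] at hle
    exact WithBot.natCast_ne_bot _ hle
  rw [degree_eq_natDegree hr] at hle
  rw [Fintype.card_fin, add_comm (i : ℕ)]
  exact_mod_cast hle

end Domain

end IsRightRegularRep

theorem IsDifferentialPolynomialRing.irreducible_of_natDegree_minimal_mem_span {F K R : Type*}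
    [Field F] [Field K] [Algebra F K] [Ring R] {δ : Derivation F K K} {ι : K →+* R} {t : R}
    {φ : R ≃+ K[X]} (h : IsDifferentialPolynomialRing δ ι t φ) {x : R}
    (hx : x ∈ Subring.center R) {f : R} (hf : Irreducible f) {q : F[X]} (hq0 : q ≠ 0)
    (hmem : centralEval ι hx (q.map (algebraMap F K)) ∈ Ideal.span {f})
    (hmin : ∀ c : F[X], c ≠ 0 → centralEval ι hx (c.map (algebraMap F K)) ∈ Ideal.span {f} →
      q.natDegree ≤ c.natDegree) : Irreducible q := by
  have := h.isDomain
  have := h.isPrincipalIdealRing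
  have := span_singleton_isMaximal_of_irreducible hf
  let Q : F[X] →+* R := (centralEval ι hx).comp (mapRingHom (algebraMap F K))
  have := comap_isPrime_of_isMaximal Q (h.centralEval_map_mem_center hx) (Ideal.span {f})
  exact irreducible_of_natDegree_minimal (I := (Ideal.span {f}).comap Q) hq0 hmem
    fun c hc hc0 => hmin c hc0 hc

namespace IsRightRegularRep

variable {F K R : Type*} [Field F] [Field K] [Algebra F K] [Ring R]
  {δ : Derivation F K K} {ι : K →+* R} {t : R} {φ : R ≃+ K[X]} {x : R}
  {hx : x ∈ Subring.center R} {n : ℕ} {ρ : R → Matrix (Fin n) (Fin n) K[X]}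

theorem exists_map_eq_det (h : IsRightRegularRep δ ι t φ hx ρ)
    (hδ : ∀ a, δ a = 0 → a ∈ (algebraMap F K).range) (r : R) :
    ∃ q : F[X], q.map (algebraMap F K) = (ρ r).det := by
  have hdet : coeffDerivation δ (ρ r).det = 0 :=
    derivation_det_eq_zero_of_map_eq_commutator _ (h.map_coeffDerivation r)
  refine (mem_lifts _).1 ((lifts_iff_coeff_lifts _).2 fun i => hδ _ ?_)
  rw [← coeff_coeffDerivation, hdet, coeff_zero]

theorem det_centralEval_map (h : IsRightRegularRep δ ι t φ hx ρ) (q : F[X]) :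
    (ρ (centralEval ι hx (q.map (algebraMap F K)))).det = (q ^ n).map (algebraMap F K) := by
  rw [h.map_centralEval_map, Matrix.scalar_apply, Matrix.det_diagonal, Fin.prod_const,
    Polynomial.map_pow]

/-- The reduced norm of `K(t;δ)` over `F(x)` restricted to `K[t;δ]`, with values in `F[x]`: the
determinant of right multiplication. The requirement `hδ` that the constants of `δ` lie in `F` is
what brings the coefficients of the determinant down from `K` to `F`. -/
noncomputable def reducedNorm (h : IsRightRegularRep δ ι t φ hx ρ)
    (hδ : ∀ a, δ a = 0 → a ∈ (algebraMap F K).range) : R →* F[X] where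
  toFun r := (h.exists_map_eq_det hδ r).choose
  map_one' := by
    apply map_injective _ (algebraMap F K).injective
    rw [(h.exists_map_eq_det hδ 1).choose_spec]
    simpa using h.det_centralEval_map 1
  map_mul' r s := by
    apply map_injective _ (algebraMap F K).injective
    rw [Polynomial.map_mul, (h.exists_map_eq_det hδ (r * s)).choose_spec,
      (h.exists_map_eq_det hδ r).choose_spec, (h.exists_map_eq_det hδ s).choose_spec, h.map_mul,
      Matrix.det_mul]

section reducedNorm

variable (h : IsRightRegularRep δ ι t φ hx ρ) (hδ : ∀ a, δ a = 0 → a ∈ (algebraMap F K).range)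
include h hδ

theorem map_reducedNorm (r : R) : (h.reducedNorm hδ r).map (algebraMap F K) = (ρ r).det :=
  (h.exists_map_eq_det hδ r).choose_spec

theorem reducedNorm_centralEval_map (q : F[X]) :
    h.reducedNorm hδ (centralEval ι hx (q.map (algebraMap F K))) = q ^ n :=
  map_injective _ (algebraMap F K).injective
    ((h.map_reducedNorm hδ _).trans (h.det_centralEval_map q))

theorem natDegree_reducedNorm_le (r : R) :
    (h.reducedNorm hδ r).natDegree ≤ (φ r).natDegree := by
  rw [← natDegree_map (algebraMap F K), h.map_reducedNorm hδ]
  exact h.natDegree_det_le r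

theorem isLocalHom_reducedNorm [NeZero n] : IsLocalHom (h.reducedNorm hδ) where
  map_nonunit r hr := h.isUnit_of_isUnit_det <| by
    rw [← h.map_reducedNorm hδ]
    exact hr.map (mapRingHom (algebraMap F K))

theorem associated_reducedNorm [NeZero n] {f : R} {q : F[X]} (hq : Irreducible q)
    (hmem : centralEval ι hx (q.map (algebraMap F K)) ∈ Ideal.span {f})
    (hdeg : q.natDegree = (φ f).natDegree) : Associated q (h.reducedNorm hδ f) := by
  have := h.isLocalHom_reducedNorm hδ
  obtain ⟨g, hg⟩ := Ideal.mem_span_singleton'.1 hmem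
  have dvd_pow : h.reducedNorm hδ f ∣ q ^ n := by
    rw [← h.reducedNorm_centralEval_map hδ, ← hg, map_mul]
    exact dvd_mul_left _ _
  have not_isUnit : ¬IsUnit (h.reducedNorm hδ f) := fun hu =>
    hq.natDegree_pos.ne' <| hdeg.trans <|
      h.natDegree_map_eq_zero_of_isUnit (isUnit_of_map_unit _ _ hu)
  have dvd : q ∣ h.reducedNorm hδ f := by
    obtain ⟨i, -, hi⟩ := (dvd_prime_pow hq.prime n).1 dvd_pow
    refine (dvd_pow_self q ?_).trans hi.dvd'
    rintro rfl
    exact not_isUnit (hi.symm.isUnit (by simp))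
  exact associated_of_dvd_of_natDegree_le dvd (ne_zero_of_dvd_ne_zero (pow_ne_zero n hq.ne_zero)
    dvd_pow) (hdeg ▸ h.natDegree_reducedNorm_le hδ f)

end reducedNorm

end IsRightRegularRep

theorem differential_irreducibility_criterion_general {F K R : Type*} [Field F] [Field K]
    [Algebra F K] [Ring R] {δ : Derivation F K K}
    (hconst : ∀ a, δ a = 0 → a ∈ (algebraMap F K).range)
    {ι : K →+* R} {t : R} {φ : R ≃+ K[X]} {x : R} (hx : x ∈ Subring.center R) {n : ℕ} [NeZero n]
    {ρ : R → Matrix (Fin n) (Fin n) K[X]} (h : IsRightRegularRep δ ι t φ hx ρ)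
    {f : R} {hhat : F[X]} (h0 : hhat ≠ 0)
    (hleft : centralEval ι hx (hhat.map (algebraMap F K)) ∈ Ideal.span {f})
    (hminimal : ∀ c : F[X], c ≠ 0 →
      centralEval ι hx (c.map (algebraMap F K)) ∈ Ideal.span {f} → hhat.natDegree ≤ c.natDegree)
    (hdeg : hhat.natDegree = (φ f).natDegree) :
    (Irreducible hhat → Irreducible f) ∧
    (Irreducible f →
      ∃ q : F[X], q.map (algebraMap F K) = (ρ f).det ∧ Irreducible q) := by
  have := h.isLocalHom_reducedNorm hconst
  have norm_irreducible (hh : Irreducible hhat) : Irreducible (h.reducedNorm hconst f) :=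
    (h.associated_reducedNorm hconst hh hleft hdeg).irreducible hh
  refine ⟨fun hh => .of_map (norm_irreducible hh), fun hf => ?_⟩
  exact ⟨_, h.map_reducedNorm hconst f, norm_irreducible
    (h.irreducible_of_natDegree_minimal_mem_span hx hf h0 hleft hminimal)⟩

theorem mulLeft_sub_mulRight_pow_char_pow {R : Type*} [Ring R] (p : ℕ) [Fact p.Prime] [CharP R p]
    (t : R) (j : ℕ) :
    (LinearMap.mulLeft ℤ t - LinearMap.mulRight ℤ t) ^ p ^ j =
      LinearMap.mulLeft ℤ (t ^ p ^ j) - LinearMap.mulRight ℤ (t ^ p ^ j) := by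
  have : CharP (Module.End ℤ R) p :=
    charP_of_injective_ringHom (f := (Algebra.lmul ℤ R).toRingHom) Algebra.lmul_injective p
  rw [sub_pow_char_pow_of_commute p j (LinearMap.commute_mulLeft_right t t),
    LinearMap.pow_mulLeft, LinearMap.pow_mulRight]

theorem mulLeft_sub_mulRight_pow_apply {K R : Type*} [Semiring K] [Ring R] {δ : K → K} {ι : K →+* R}
    {t : R} (ht : ∀ a, t * ι a = ι a * t + ι (δ a)) (k : ℕ) (a : K) :
    ((LinearMap.mulLeft ℤ t - LinearMap.mulRight ℤ t) ^ k) (ι a) = ι (δ^[k] a) := by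
  induction k with
  | zero => rfl
  | succ k ih =>
    rw [pow_succ', Module.End.mul_apply, ih, Function.iterate_succ_apply', LinearMap.sub_apply,
      LinearMap.mulLeft_apply, LinearMap.mulRight_apply, ht, add_sub_cancel_left]

theorem pow_char_pow_mul_apply {K R : Type*} [Semiring K] [Ring R] (p : ℕ) [Fact p.Prime]
    [CharP R p] {δ : K → K} {ι : K →+* R} {t : R} (ht : ∀ a, t * ι a = ι a * t + ι (δ a)) (j : ℕ)
    (a : K) : t ^ p ^ j * ι a = ι a * t ^ p ^ j + ι (δ^[p ^ j] a) := by
  rw [← mulLeft_sub_mulRight_pow_apply ht, mulLeft_sub_mulRight_pow_char_pow, LinearMap.sub_apply,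
    LinearMap.mulLeft_apply, LinearMap.mulRight_apply, add_sub_cancel]

namespace IsDifferentialPolynomialRing

variable {F K R : Type*} [CommRing F] [CommRing K] [Algebra F K] [Ring R]
  {δ : Derivation F K K} {ι : K →+* R} {t : R} {φ : R ≃+ K[X]} {x : R} {p e : ℕ} {c : ℕ → F}

theorem mem_center_of_eq_pPolynomial [Fact p.Prime] [CharP R p]
    (h : IsDifferentialPolynomialRing δ ι t φ)
    (hg : ∀ a, δ^[p ^ e] a
      + ∑ i ∈ Finset.range e, algebraMap F K (c i) * δ^[p ^ (e - 1 - i)] a = 0)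
    (hx : x = t ^ p ^ e
      + ∑ i ∈ Finset.range e, ι (algebraMap F K (c i)) * t ^ p ^ (e - 1 - i)) :
    x ∈ Subring.center R := by
  refine h.mem_center_of_commute (fun a => ?_) ?_
  · have t_pow_mul_ι (j : ℕ) := pow_char_pow_mul_apply p h.t_mul j a
    have term_mul (i : ℕ) : ι (algebraMap F K (c i)) * t ^ p ^ (e - 1 - i) * ι a =
        ι a * (ι (algebraMap F K (c i)) * t ^ p ^ (e - 1 - i)) +
          ι (algebraMap F K (c i) * δ^[p ^ (e - 1 - i)] a) := by
      rw [mul_assoc, t_pow_mul_ι, mul_add, ← mul_assoc, ← mul_assoc, ← map_mul, ← map_mul,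
        ← map_mul, mul_comm a]
    have x_mul : x * ι a = ι a * x + ι (δ^[p ^ e] a
        + ∑ i ∈ Finset.range e, algebraMap F K (c i) * δ^[p ^ (e - 1 - i)] a) := by
      rw [hx, add_mul, t_pow_mul_ι, Finset.sum_mul]
      simp only [term_mul]
      rw [Finset.sum_add_distrib, ← Finset.mul_sum, map_add, map_sum, mul_add]
      abel
    rw [hg, map_zero, add_zero] at x_mul
    exact x_mul.symm
  · have commute_t (b : F) : Commute t (ι (algebraMap F K b)) := by
      rw [Commute, SemiconjBy, h.t_mul, Derivation.map_algebraMap, map_zero, add_zero]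
    rw [hx]
    exact ((Commute.refl t).pow_right _).add_right <| Commute.sum_right _ _ _ fun i _ =>
      (commute_t _).mul_right ((Commute.refl t).pow_right _)

theorem degree_map_of_eq_pPolynomial [Nontrivial K] (h : IsDifferentialPolynomialRing δ ι t φ)
    (hp : 1 < p)
    (hx : x = t ^ p ^ e
      + ∑ i ∈ Finset.range e, ι (algebraMap F K (c i)) * t ^ p ^ (e - 1 - i)) :
    (φ x).degree = (p ^ e : ℕ) := by
  have degree_lower : (∑ i ∈ Finset.range e,
      monomial (p ^ (e - 1 - i)) (algebraMap F K (c i))).degree < (p ^ e : ℕ) := by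
    rw [← mem_degreeLT]
    refine Submodule.sum_mem _ fun i hi => mem_degreeLT.2 ((degree_monomial_le _ _).trans_lt ?_)
    have hexp : e - 1 - i < e := by
      have := Finset.mem_range.1 hi
      lia
    exact_mod_cast Nat.pow_lt_pow_right hp hexp
  rw [hx, map_add, map_sum, h.map_t_pow]
  simp only [h.map_monomial]
  rw [degree_add_eq_left_of_degree_lt (by rwa [degree_X_pow]), degree_X_pow]

end IsDifferentialPolynomialRing

theorem sup_support_eq_natDegree_of_coeff_eq {R : Type*} [Semiring R] {v : ℕ →₀ R} {q : R[X]}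
    (hv : ∀ i, q.coeff i = v i) : v.support.sup id = q.natDegree := by
  have support_eq : v.support = q.support := by
    ext i
    rw [Finsupp.mem_support_iff, mem_support_iff, hv]
  rw [support_eq]
  refine le_antisymm (Finset.sup_le fun i hi => le_natDegree_of_mem_supp i hi) ?_
  rcases eq_or_ne q 0 with rfl | hq
  · exact Nat.zero_le _
  · exact Finset.le_sup (f := id) (natDegree_mem_support_of_nonzero hq)

theorem exists_derivation_coe_eq {F K : Type*} [CommRing F] [CommRing K] [Algebra F K] {δ : K → K}
    (hadd : ∀ a b, δ (a + b) = δ a + δ b) (hleibniz : ∀ a b, δ (a * b) = a * δ b + δ a * b)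
    (hconst : ∀ a : F, δ (algebraMap F K a) = 0) : ∃ D : Derivation F K K, ⇑D = δ := by
  let L : K →ₗ[F] K :=
    { toFun := δ
      map_add' := hadd
      map_smul' := fun c a => by
        rw [Algebra.smul_def, hleibniz, hconst, zero_mul, add_zero, RingHom.id_apply,
          Algebra.smul_def] }
  refine ⟨.mk' L fun a b => ?_, rfl⟩
  rw [smul_eq_mul, smul_eq_mul, mul_comm b]
  exact hleibniz a b

theorem exists_isDifferentialPolynomialRing {F K R : Type*} [CommRing F] [CommRing K] [Algebra F K]
    [Ring R] {δ : Derivation F K K} {ι : K →+* R} {t : R}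
    (hmul : ∀ a, t * ι a = ι a * t + ι (δ a)) {coeff : R →+ (ℕ →₀ K)}
    (hcoeff : ∀ a i, coeff (ι a * t ^ i) = Finsupp.single i a)
    (hrepr : ∀ r, (coeff r).sum (fun i a => ι a * t ^ i) = r) :
    ∃ φ : R ≃+ K[X], IsDifferentialPolynomialRing δ ι t φ ∧
      ∀ r i, (φ r).coeff i = coeff r i := by
  have coeff_sum (v : ℕ →₀ K) : coeff (v.sum fun i a => ι a * t ^ i) = v := by
    simp only [map_finsuppSum, hcoeff, Finsupp.sum_single]
  let coeffEquiv : R ≃+ (ℕ →₀ K) :=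
    { coeff with
      invFun := fun v => v.sum fun i a => ι a * t ^ i
      left_inv := hrepr
      right_inv := coeff_sum }
  let φ : R ≃+ K[X] := coeffEquiv.trans
    (AddMonoidAlgebra.coeffAddEquiv.symm.trans (toFinsuppIso K).symm.toAddEquiv)
  have coeff_φ (r : R) (i : ℕ) : (φ r).coeff i = coeff r i := rfl
  refine ⟨φ, ⟨hmul, fun a i => ?_⟩, coeff_φ⟩
  ext j
  rw [coeff_φ, hcoeff, coeff_monomial, Finsupp.single_apply]

/-- In `R = K[t;δ]`: if `f` has degree `m` and its minimal central left multiple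
`ĥ ∈ F[x]` has degree `m`, then: if `ĥ` is irreducible in `F[x]` then `f` is
irreducible in `R`; conversely if `f` is irreducible then `N(f)` is irreducible
in `F[x]`. -/
theorem differential_irreducibility_criterion
    (p : ℕ) [Fact p.Prime] (F K : Type) [Field F] [Field K] [Algebra F K]
    [CharP F p]
    (hinsep : ∀ x : K, x ^ p ∈ (algebraMap F K).range)
    (e : ℕ) (hdim : Module.finrank F K = p ^ e)
    (δ : K → K)
    (hadd : ∀ a b : K, δ (a + b) = δ a + δ b)
    (hleibniz : ∀ a b : K, δ (a * b) = a * δ b + δ a * b)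
    (hconst : ∀ x : K, δ x = 0 ↔ x ∈ (algebraMap F K).range)
    (c : ℕ → F)
    (hg : ∀ x : K, δ^[p ^ e] x
      + ∑ i ∈ Finset.range e, algebraMap F K (c i) * δ^[p ^ (e - 1 - i)] x = 0)
    (R : Type) [Ring R] (ι : K →+* R) (t : R)
    (hmul : ∀ a : K, t * ι a = ι a * t + ι (δ a))
    (coeff : R →+ (ℕ →₀ K))
    (hcoeff : ∀ (a : K) (i : ℕ), coeff (ι a * t ^ i) = Finsupp.single i a)
    (hrepr : ∀ x : R, (coeff x).sum (fun i a => ι a * t ^ i) = x)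
    (xR : R) (hxR : xR = t ^ (p ^ e)
      + ∑ i ∈ Finset.range e, ι (algebraMap F K (c i)) * t ^ (p ^ (e - 1 - i)))
    (ρ : R → Matrix (Fin (p ^ e)) (Fin (p ^ e)) (Polynomial K))
    (hρ : ∀ (g : R) (i : Fin (p ^ e)), t ^ (i : ℕ) * g =
      ∑ j : Fin (p ^ e), ((ρ g i j).sum fun k a => ι a * xR ^ k) * t ^ (j : ℕ))
    (N : R → Polynomial K) (hN : ∀ g : R, N g = (ρ g).det)
    (f : R) (m : ℕ) (hdeg : coeff f m ≠ 0 ∧ ∀ i : ℕ, m < i → coeff f i = 0)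
    -- ĥ ∈ F[x] monic with h = ĥ(g(t)) the minimal central left multiple of f:
    (hhat : Polynomial F) (hmonic : hhat.Monic)
    (hleft : ∃ g : R, (hhat.sum fun k a => ι (algebraMap F K a) * xR ^ k) = g * f)
    (hcentral : (hhat.sum fun k a => ι (algebraMap F K a) * xR ^ k) ∈ Subring.center R)
    (hminimal : ∀ cc : R, cc ∈ Subring.center R → cc ≠ 0 → (∃ g : R, cc = g * f) →
      (coeff (hhat.sum fun k a => ι (algebraMap F K a) * xR ^ k)).support.sup id ≤
        (coeff cc).support.sup id)
    (hdeghat : hhat.natDegree = m) :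
    (Irreducible hhat → Irreducible f) ∧
    (Irreducible f →
      ∃ q : Polynomial F, q.map (algebraMap F K) = N f ∧ Irreducible q) := by
  obtain ⟨δ, rfl⟩ := exists_derivation_coe_eq hadd hleibniz fun a : F => (hconst _).2 ⟨a, rfl⟩
  obtain ⟨φ, h, hφ⟩ := exists_isDifferentialPolynomialRing hmul hcoeff hrepr
  have := h.isDomain
  have := charP_of_injective_ringHom (ι.comp (algebraMap F K)).injective p
  have hx : xR ∈ Subring.center R := h.mem_center_of_eq_pPolynomial hg hxR
  have hrep : IsRightRegularRep δ ι t φ hx ρ := by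
    refine ⟨h, h.degree_map_of_eq_pPolynomial (Fact.out : p.Prime).one_lt hxR, fun g i => ?_⟩
    simpa only [ofCoordinates_apply, centralEval_apply] using hρ g i
  have sup_support (r : R) := sup_support_eq_natDegree_of_coeff_eq (hφ r)
  have hdegf : (φ f).natDegree = m :=
    natDegree_eq_of_le_of_coeff_ne_zero (natDegree_le_iff_coeff_eq_zero.2 fun i hi =>
      (hφ f i).trans (hdeg.2 i hi)) ((hφ f m).trans_ne hdeg.1)
  simp only [← centralEval_map ι (algebraMap F K) hx, sup_support,
    h.natDegree_map_centralEval hx hrep.degree_map, natDegree_map] at hleft hminimal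
  rw [hN]
  refine differential_irreducibility_criterion_general (fun a => (hconst a).1) hx hrep
    hmonic.ne_zero (Ideal.mem_span_singleton'.2 (hleft.imp fun _ => Eq.symm)) (fun q hq hqf => ?_)
    (hdeghat.trans hdegf.symm)
  have hle := hminimal _ (h.centralEval_map_mem_center hx q)
    ((map_ne_zero_iff _ (h.centralEval_injective hx hrep.degree_map)).2
      ((Polynomial.map_ne_zero_iff (algebraMap F K).injective).2 hq))
    ((Ideal.mem_span_singleton'.1 hqf).imp fun _ => Eq.symm)
  rw [h.natDegree_map_centralEval hx hrep.degree_map, natDegree_map] at hle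
  exact Nat.le_of_mul_le_mul_left hle (NeZero.pos _)
end

section
/- Let D be a central division algebra of degree d over C possessing a (maximal) subfield E with [E:C] = d, σ an automorphism of D with σ^n = i_u, u ∈ Fix(σ), and σ|_C of order n over F = C ∩ Fix(σ). Let N be the reduced norm of D(t;σ) ≅ (D(x), σ̃, ux) over F(x). Then for every f ∈ D[t;σ] of degree m, N(f) ∈ F[x] and deg_x N(f) = d·m. -/
/-!
`D[t;σ]` is a domain, free of rank `n · n d²` over its center `F[x]`, `x = u⁻¹ tⁿ`, so inverting the
nonzero elements of `F[x]` produces a central division algebra over `F(x)` of degree `d n`. A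
representation `ρ` of degree `N` of a central division algebra `A` of dimension `N²` splits `A` over
the algebraic closure; there Morita theory makes `N` divide the dimension of `A` over `K(f)`, so the
characteristic polynomial of `ρ f` is a power of the minimal polynomial of `f` and `det (ρ f)` lies
in the center. Hence `N(f) ∈ E[x] ∩ F(x)` commutes with all of `D[t;σ]`, which puts its coefficients
into `C ∩ Fix(σ)`.

For the degree, give the basis vector `v_a tⁱ` the weight `i`. Right multiplication by `f` raises
the degree in `t` by `deg f`, and the weights cancel along every permutation in the determinant, so
`deg N(f) ≤ d · deg f`.
Equality follows by choosing `g` with `f g = q ∈ F[x]` nonzero: `N(f) N(g) = q ^ (d n)` has degree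
`d · deg f + d · deg g`.
-/

section CentralSimple

open Polynomial TensorProduct

section LinearRelations

theorem sum_smul_map_commutator_eq_zero {Ω A B G I : Type*} [CommRing Ω] [Ring A] [Ring B]
    [Algebra Ω B] [FunLike G A B] [RingHomClass G A B] (ρ : G) (ω : I → Ω) {s : Finset I}
    {a : I → A} (h : ∑ i ∈ s, ω i • ρ (a i) = 0) (b : A) :
    ∑ i ∈ s, ω i • ρ (a i * b - b * a i) = 0 := by
  have hright : ∑ i ∈ s, ω i • (ρ (a i) * ρ b) = 0 := by
    simpa only [Finset.sum_mul, smul_mul_assoc, zero_mul] using congrArg (· * ρ b) h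
  have hleft : ∑ i ∈ s, ω i • (ρ b * ρ (a i)) = 0 := by
    simpa only [Finset.mul_sum, mul_smul_comm, mul_zero] using congrArg (ρ b * ·) h
  simp only [map_sub, map_mul, smul_sub, Finset.sum_sub_distrib, hright, hleft, sub_zero]

variable {K A Ω B I : Type*} [Field K] [Field Ω] [Algebra K Ω] [Ring B] [Nontrivial B]
  [Algebra Ω B] [Algebra K B] [IsScalarTower K Ω B]

theorem eq_zero_of_sum_smul_algebraMap_eq_zero {ω : I → Ω} (hω : LinearIndependent K ω)
    {s : Finset I} {c : I → K} (h : ∑ i ∈ s, ω i • algebraMap K B (c i) = 0) :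
    ∀ i ∈ s, c i = 0 := by
  refine linearIndependent_iff'.1 hω s c ((algebraMap Ω B).injective ?_)
  simpa only [map_sum, map_zero, Algebra.smul_def, map_mul, mul_comm (algebraMap K Ω _),
    ← IsScalarTower.algebraMap_apply] using h

variable [DivisionRing A] [Algebra K A] [Algebra.IsCentral K A]

theorem eq_zero_of_sum_smul_map_eq_zero (ρ : A →ₐ[K] B) {ω : I → Ω}
    (hω : LinearIndependent K ω) {s : Finset I} {a : I → A}
    (h : ∑ i ∈ s, ω i • ρ (a i) = 0) : ∀ i ∈ s, a i = 0 := by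
  classical
  induction s using Finset.induction_on generalizing a with
  | empty => exact fun i hi ↦ absurd hi (Finset.notMem_empty i)
  | insert i₀ s hi₀ ih =>
    suffices h₀ : a i₀ = 0 by
      rw [Finset.sum_insert hi₀, h₀, map_zero, smul_zero, zero_add] at h
      exact Finset.forall_mem_insert _ _ _ |>.2 ⟨h₀, ih h⟩
    by_contra h₀
    -- Normalise the coefficient of `ω i₀` to be `1`: it drops out of every commutator, so by
    -- induction all coefficients are central.
    have hnormalized : ∑ i ∈ insert i₀ s, ω i • ρ (a i * (a i₀)⁻¹) = 0 := by
      simpa only [Finset.sum_mul, smul_mul_assoc, zero_mul, map_mul]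
        using congrArg (· * ρ (a i₀)⁻¹) h
    have hcomm (b : A) : ∀ i ∈ s, a i * (a i₀)⁻¹ * b - b * (a i * (a i₀)⁻¹) = 0 := by
      have hrel := sum_smul_map_commutator_eq_zero ρ ω hnormalized b
      rw [Finset.sum_insert hi₀, mul_inv_cancel₀ h₀, one_mul, mul_one, sub_self, map_zero,
        smul_zero, zero_add] at hrel
      exact ih hrel
    have hscalar : ∀ i ∈ insert i₀ s, ∃ c : K, algebraMap K A c = a i * (a i₀)⁻¹ := by
      refine Finset.forall_mem_insert _ _ _ |>.2
        ⟨⟨1, by rw [map_one, mul_inv_cancel₀ h₀]⟩, fun i hi ↦ ?_⟩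
      exact Algebra.mem_bot.1 (Algebra.IsCentral.out (Subalgebra.mem_center_iff.2
        fun b ↦ (sub_eq_zero.1 (hcomm b i hi)).symm))
    choose! c hc using hscalar
    have hc₀ : c i₀ = 0 := by
      refine eq_zero_of_sum_smul_algebraMap_eq_zero (B := B) (s := insert i₀ s) hω ?_ i₀
        (Finset.mem_insert_self _ _)
      rw [← hnormalized]
      exact Finset.sum_congr rfl fun i hi ↦ by rw [← hc i hi, AlgHom.commutes]
    have hone := hc i₀ (Finset.mem_insert_self _ _)
    rw [hc₀, map_zero, mul_inv_cancel₀ h₀] at hone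
    exact zero_ne_one hone

end LinearRelations

section Splitting

section ScalarExtension

variable {K A Ω B : Type*} [CommSemiring K] [Semiring A] [Algebra K A] [CommSemiring Ω]
  [Algebra K Ω] [Semiring B] [Algebra Ω B] [Algebra K B] [IsScalarTower K Ω B]

/-- The `Ω`-algebra homomorphism `Ω ⊗[K] A →ₐ[Ω] B`, `c ⊗ a ↦ c • ρ a`, extending the
`K`-algebra homomorphism `ρ : A →ₐ[K] B`. -/
noncomputable def scalarExtension (ρ : A →ₐ[K] B) : Ω ⊗[K] A →ₐ[Ω] B :=
  Algebra.TensorProduct.lift (Algebra.ofId Ω B) ρ fun c a ↦ Algebra.commutes c (ρ a)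

theorem scalarExtension_tmul (ρ : A →ₐ[K] B) (c : Ω) (a : A) :
    scalarExtension ρ (c ⊗ₜ a) = c • ρ a :=
  (Algebra.TensorProduct.lift_tmul ..).trans (Algebra.smul_def c (ρ a)).symm

end ScalarExtension

variable {K A Ω B : Type*} [Field K] [DivisionRing A] [Algebra K A] [Field Ω] [Algebra K Ω]
  [Ring B] [Algebra Ω B] [Algebra K B] [IsScalarTower K Ω B]

theorem scalarExtension_injective [Algebra.IsCentral K A] [Nontrivial B] (ρ : A →ₐ[K] B) :
    Function.Injective (scalarExtension (Ω := Ω) ρ) := by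
  rw [injective_iff_map_eq_zero]
  intro z hz
  let b := Module.Free.chooseBasis K Ω
  let e := TensorProduct.equivFinsuppOfBasisLeft (N := A) b
  obtain ⟨a, rfl⟩ := e.symm.surjective z
  simp only [e, TensorProduct.equivFinsuppOfBasisLeft_symm_apply, Finsupp.sum, map_sum,
    scalarExtension_tmul] at hz ⊢
  have ha := eq_zero_of_sum_smul_map_eq_zero ρ b.linearIndependent hz
  exact Finset.sum_eq_zero fun i hi ↦ by rw [ha i hi, tmul_zero]

/-- A representation of degree `N` of a central division algebra of dimension `N²` splits it. -/
noncomputable def splittingEquiv [Algebra.IsCentral K A] [FiniteDimensional K A] {I : Type*}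
    [Fintype I] [DecidableEq I] [Nonempty I]
    (hcard : Module.finrank K A = Fintype.card I * Fintype.card I)
    (ρ : A →ₐ[K] Matrix I I Ω) : Ω ⊗[K] A ≃ₐ[Ω] Matrix I I Ω :=
  have hfinrank : Module.finrank Ω (Ω ⊗[K] A) = Module.finrank Ω (Matrix I I Ω) := by
    rw [Module.finrank_baseChange, hcard, Module.finrank_matrix, Module.finrank_self, mul_one]
  have hinj := scalarExtension_injective (Ω := Ω) ρ
  AlgEquiv.ofBijective (scalarExtension ρ)
    ⟨hinj, (LinearMap.injective_iff_surjective_of_finrank_eq_finrank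
      (f := (scalarExtension ρ).toLinearMap) hfinrank).1 hinj⟩

end Splitting

open Matrix.Module in
/-- By Morita theory, `W` is the sum of `card I` copies of its image under a primitive matrix
unit. -/
theorem card_dvd_finrank_of_matrix_module {Ω W I : Type*} [Field Ω] [AddCommGroup W]
    [inst : Module Ω W] [Fintype I] [DecidableEq I] [Nonempty I]
    [Module (Matrix I I Ω) W] [IsScalarTower Ω (Matrix I I Ω) W] [FiniteDimensional Ω W] :
    Fintype.card I ∣ Module.finrank Ω W := by
  have hinst : inst = Module.compHom W (Matrix.scalar (α := Ω) I) :=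
    Module.ext' _ _ fun c w ↦ by
      rw [← one_smul (Matrix I I Ω) w, ← smul_assoc, Matrix.smul_one_eq_diagonal, one_smul]
      rfl
  subst hinst
  let : Module Ω (ModuleCat.of (Matrix I I Ω) W) := Module.compHom W (Matrix.scalar (α := Ω) I)
  have : IsScalarTower Ω (Matrix I I Ω) (ModuleCat.of (Matrix I I Ω) W) :=
    MatrixModCat.isScalarTower_toModuleCat Ω (.of (Matrix I I Ω) W)
  have e := toModuleCatFromModuleCatLinearEquiv Ω (.of (Matrix I I Ω) W) (Classical.arbitrary I)
  have he := (e.restrictScalars Ω).finrank_eq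
  rw [Module.finrank_pi_fintype, Finset.sum_const, smul_eq_mul] at he
  exact ⟨_, he⟩

theorem charpoly_pi_comp_proj {K V : Type*} (ι : Type*) [CommRing K] [AddCommGroup V] [Module K V]
    [Module.Free K V] [Module.Finite K V] [Fintype ι] (S : Module.End K V) :
    (LinearMap.pi fun i : ι ↦ S ∘ₗ LinearMap.proj i).charpoly = S.charpoly ^ Fintype.card ι := by
  nontriviality K
  refine Fintype.induction_empty_option (P := fun ι _ ↦
    (LinearMap.pi fun i : ι ↦ S ∘ₗ LinearMap.proj i).charpoly = S.charpoly ^ Fintype.card ι)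
    (fun α β _ e ih ↦ ?_) ?_ (fun α _ ih ↦ ?_) ι
  · let : Fintype α := Fintype.ofEquiv β e.symm
    rw [← LinearEquiv.charpoly_conj (LinearEquiv.funCongrLeft K V e), ← Fintype.card_congr e, ← ih]
    congr 1
    ext v i
    simp [LinearEquiv.conj_apply]
  · rw [Fintype.card_pempty, pow_zero, ← (LinearMap.charpoly_monic _).natDegree_eq_zero,
      LinearMap.charpoly_natDegree, Module.finrank_zero_of_subsingleton]
  · rw [← LinearEquiv.charpoly_conj (LinearEquiv.piOptionEquivProd K), Fintype.card_option,
      pow_succ', ← ih, ← LinearMap.charpoly_prodMap]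
    rfl

theorem charpoly_eq_pow_of_intertwine {K V V₀ ι : Type*} [CommRing K] [AddCommGroup V]
    [Module K V] [Module.Free K V] [Module.Finite K V] [AddCommGroup V₀] [Module K V₀]
    [Module.Free K V₀] [Module.Finite K V₀] [Fintype ι] (e : V ≃ₗ[K] (ι → V₀))
    {T : Module.End K V} {S : Module.End K V₀} (h : ∀ v i, e (T v) i = S (e v i)) :
    T.charpoly = S.charpoly ^ Fintype.card ι := by
  have hconj : e.conj T = LinearMap.pi fun i ↦ S ∘ₗ LinearMap.proj i :=
    LinearMap.ext fun v ↦ funext fun i ↦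
      (h (e.symm v) i).trans (by rw [e.apply_symm_apply]; rfl)
  rw [← LinearEquiv.charpoly_conj e, hconj, charpoly_pi_comp_proj]

theorem charpoly_mulRight_matrix {Ω I : Type*} [CommRing Ω] [Fintype I] [DecidableEq I]
    (P : Matrix I I Ω) :
    (LinearMap.mulRight Ω P).charpoly = P.charpoly ^ Fintype.card I := by
  rw [← Matrix.charpoly_transpose P, ← Matrix.charpoly_toLin']
  refine charpoly_eq_pow_of_intertwine (LinearEquiv.refl Ω (I → I → Ω)) fun M i ↦ ?_
  rw [Matrix.toLin'_apply, Matrix.mulVec_transpose]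
  rfl

theorem charpoly_lsmul {K M : Type*} (W : Type*) [CommRing K] [CommRing M] [Nontrivial M]
    [Algebra K M] [Module.Free K M] [Module.Finite K M] [AddCommGroup W] [Module K W]
    [Module M W] [IsScalarTower K M W] [Module.Free K W] [Module.Finite K W] [Module.Free M W]
    [Module.Finite M W] (m : M) :
    (Algebra.lsmul K K W m).charpoly =
      (LinearMap.mulLeft K m).charpoly ^ Module.finrank M W := by
  let b := Module.finBasis M W
  rw [← Fintype.card_fin (Module.finrank M W)]
  refine charpoly_eq_pow_of_intertwine (b.equivFun.restrictScalars K) fun w i ↦ ?_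
  exact congrFun (b.equivFun.map_smul m w) i

theorem charpoly_mulLeft_root {K : Type*} [Field K] {p : K[X]} (hp : p.Monic) :
    haveI := hp.finite_adjoinRoot
    haveI := hp.free_adjoinRoot
    (LinearMap.mulLeft K (AdjoinRoot.root p)).charpoly = p := by
  have := hp.finite_adjoinRoot
  have := hp.free_adjoinRoot
  have h := charpoly_leftMulMatrix (AdjoinRoot.powerBasis hp.ne_zero)
  rwa [AdjoinRoot.minpoly_powerBasis_gen_of_monic hp, ← Algebra.toMatrix_lmul_eq,
    LinearMap.charpoly_toMatrix] at h

theorem card_dvd_finrank_of_splitting {K A M Ω W I : Type*} [Field K] [DivisionRing A]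
    [Algebra K A] [Field M] [Algebra K M] [Algebra.IsAlgebraic K M] [Field Ω] [IsAlgClosed Ω]
    [Algebra K Ω] [AddCommGroup W] [Module K W] [Module A W] [IsScalarTower K A W] [Module M W]
    [IsScalarTower K M W] [SMulCommClass A M W] [FiniteDimensional M W] [Fintype I]
    [DecidableEq I] [Nonempty I] (Φ : Ω ⊗[K] A ≃ₐ[Ω] Matrix I I Ω) :
    Fintype.card I ∣ Module.finrank M W := by
  let g : M →ₐ[K] Ω := IsAlgClosed.lift
  let : Algebra M Ω := g.toAlgebra
  have : IsScalarTower K M Ω := IsScalarTower.of_algebraMap_eq fun c ↦ (g.commutes c).symm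
  let act : A →ₐ[K] Module.End Ω (Ω ⊗[M] W) :=
    ((Module.End.baseChangeHom M Ω W).restrictScalars K).comp (Algebra.lsmul K M W)
  let ψ : Matrix I I Ω →ₐ[Ω] Module.End Ω (Ω ⊗[M] W) :=
    (scalarExtension (B := Module.End Ω (Ω ⊗[M] W)) act).comp Φ.symm.toAlgHom
  let : Module (Matrix I I Ω) (Ω ⊗[M] W) := Module.compHom _ ψ.toRingHom
  have : IsScalarTower Ω (Matrix I I Ω) (Ω ⊗[M] W) :=
    ⟨fun c P w ↦ congrArg (fun T : Module.End Ω (Ω ⊗[M] W) ↦ T w) (map_smul ψ c P)⟩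
  rw [← Module.finrank_baseChange (R := Ω)]
  exact card_dvd_finrank_of_matrix_module (I := I)

section ReducedNorm

variable {K A : Type*} [Field K] [DivisionRing A] [Algebra K A]

/-- Right multiplication of `K[f]`, presented as `AdjoinRoot (minpoly K f)`, on `A`. -/
noncomputable def minpolyRightHom (f : A) : AdjoinRoot (minpoly K f) →ₐ[K] Aᵐᵒᵖ :=
  Ideal.Quotient.liftₐ _
    ((aeval f : K[X] →ₐ[K] A).toOpposite fun p q ↦ (Commute.all p q).map (aeval f))
    fun p hp ↦ by
      obtain ⟨q, rfl⟩ := Ideal.mem_span_singleton.1 hp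
      change MulOpposite.op (aeval f (minpoly K f * q)) = 0
      rw [map_mul, minpoly.aeval, zero_mul, MulOpposite.op_zero]

theorem minpolyRightHom_root (f : A) :
    minpolyRightHom f (AdjoinRoot.root (minpoly K f)) = MulOpposite.op f :=
  congrArg MulOpposite.op (aeval_X f)

variable [FiniteDimensional K A]

theorem exists_charpoly_mulRight_eq_minpoly_pow {Ω I : Type*} [Field Ω] [IsAlgClosed Ω]
    [Algebra K Ω] [Fintype I] [DecidableEq I] [Nonempty I]
    (Φ : Ω ⊗[K] A ≃ₐ[Ω] Matrix I I Ω) (f : A) :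
    ∃ s, (LinearMap.mulRight K f).charpoly = (minpoly K f) ^ (Fintype.card I * s) := by
  have hint : IsIntegral K f := Algebra.IsIntegral.isIntegral f
  have hmonic := minpoly.monic hint
  have : Fact (Irreducible (minpoly K f)) := ⟨minpoly.irreducible hint⟩
  have := hmonic.finite_adjoinRoot
  let : Module (AdjoinRoot (minpoly K f)) A := Module.compHom A (minpolyRightHom f).toRingHom
  have : IsScalarTower K (AdjoinRoot (minpoly K f)) A :=
    ⟨fun c m a ↦ by
      change minpolyRightHom f (c • m) • a = c • minpolyRightHom f m • a
      rw [map_smul, smul_assoc]⟩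
  have : SMulCommClass A (AdjoinRoot (minpoly K f)) A :=
    ⟨fun a m b ↦ smul_comm a (minpolyRightHom f m) b⟩
  have : FiniteDimensional (AdjoinRoot (minpoly K f)) A :=
    Module.Finite.of_restrictScalars_finite K _ A
  obtain ⟨s, hs⟩ := card_dvd_finrank_of_splitting (M := AdjoinRoot (minpoly K f)) (W := A) Φ
  have hroot : LinearMap.mulRight K f = Algebra.lsmul K K A (AdjoinRoot.root (minpoly K f)) :=
    LinearMap.ext fun a ↦ (congrArg (· • a) (minpolyRightHom_root f)).symm
  refine ⟨s, ?_⟩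
  rw [hroot, charpoly_lsmul, charpoly_mulLeft_root hmonic, hs]

theorem map_charpoly_mulRight {Ω I : Type*} [Field Ω] [Algebra K Ω] [Fintype I]
    [DecidableEq I] (Φ : Ω ⊗[K] A ≃ₐ[Ω] Matrix I I Ω) (f : A) :
    (LinearMap.mulRight K f).charpoly.map (algebraMap K Ω) =
      (Φ (1 ⊗ₜ f)).charpoly ^ Fintype.card I := by
  rw [← LinearMap.charpoly_baseChange, ← charpoly_mulRight_matrix,
    ← LinearEquiv.charpoly_conj Φ.toLinearEquiv]
  congr 1
  have hbase : (LinearMap.mulRight K f).baseChange Ω = LinearMap.mulRight Ω (1 ⊗ₜ[K] f) := by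
    ext a
    simp
  ext1 P
  simp [LinearEquiv.conj_apply, hbase]

theorem exists_charpoly_eq_map_minpoly_pow {Ω I : Type*} [Field Ω] [IsAlgClosed Ω] [Algebra K Ω]
    [Fintype I] [DecidableEq I] [Nonempty I] (Φ : Ω ⊗[K] A ≃ₐ[Ω] Matrix I I Ω) (f : A) :
    ∃ s, (Φ (1 ⊗ₜ f)).charpoly = (minpoly K f ^ s).map (algebraMap K Ω) := by
  obtain ⟨s, hs⟩ := exists_charpoly_mulRight_eq_minpoly_pow Φ f
  have hpow : (Φ (1 ⊗ₜ f)).charpoly ^ Fintype.card I =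
      ((minpoly K f ^ s).map (algebraMap K Ω)) ^ Fintype.card I := by
    rw [← map_charpoly_mulRight, hs, mul_comm, pow_mul, Polynomial.map_pow]
  have hmonic : (minpoly K f).Monic := minpoly.monic (Algebra.IsIntegral.isIntegral f)
  exact ⟨s, eq_of_monic_of_associated (Matrix.charpoly_monic _) ((hmonic.pow s).map _)
    (associated_of_dvd_dvd (UniqueFactorizationMonoid.pow_dvd_pow_iff_dvd Fintype.card_ne_zero
      |>.1 hpow.dvd) (UniqueFactorizationMonoid.pow_dvd_pow_iff_dvd Fintype.card_ne_zero
      |>.1 hpow.symm.dvd))⟩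

variable [Algebra.IsCentral K A] {I : Type*} [Fintype I] [DecidableEq I] [Nonempty I]

theorem det_mem_range_algebraMap_of_isAlgClosed {Ω : Type*} [Field Ω] [IsAlgClosed Ω]
    [Algebra K Ω] (hcard : Module.finrank K A = Fintype.card I * Fintype.card I)
    (ρ : A →ₐ[K] Matrix I I Ω) (f : A) : (ρ f).det ∈ Set.range (algebraMap K Ω) := by
  obtain ⟨s, hs⟩ := exists_charpoly_eq_map_minpoly_pow (splittingEquiv hcard ρ) f
  have hρ : splittingEquiv hcard ρ (1 ⊗ₜ f) = ρ f :=
    (scalarExtension_tmul ρ 1 f).trans (one_smul Ω (ρ f))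
  refine ⟨(-1) ^ Fintype.card I * (minpoly K f ^ s).coeff 0, ?_⟩
  rw [Matrix.det_eq_sign_charpoly_coeff, ← hρ, hs, coeff_map, map_mul, map_pow, map_neg, map_one]

theorem det_mem_range_algebraMap {L : Type*} [Field L] [Algebra K L]
    (hcard : Module.finrank K A = Fintype.card I * Fintype.card I)
    (ρ : A →ₐ[K] Matrix I I L) (f : A) : (ρ f).det ∈ Set.range (algebraMap K L) := by
  let toClosure : L →ₐ[K] AlgebraicClosure L := IsScalarTower.toAlgHom K L _
  obtain ⟨c, hc⟩ := det_mem_range_algebraMap_of_isAlgClosed hcard (toClosure.mapMatrix.comp ρ) f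
  refine ⟨c, (algebraMap L (AlgebraicClosure L)).injective ?_⟩
  rw [← IsScalarTower.algebraMap_apply, hc, RingHom.map_det]
  rfl

end ReducedNorm

end CentralSimple

section Orders

open TensorProduct nonZeroDivisors

variable {Z R A : Type*} [CommRing Z] [Ring R] [Algebra Z R] [Ring A] [Algebra Z A]
  {i : R →ₐ[Z] A} [IsLocalizedModule Z⁰ i.toLinearMap]

variable (i) in
theorem exists_smul_eq_map (y : A) :
    ∃ z : Z⁰, ∃ r : R, z • y = i r := by
  obtain ⟨⟨r, z⟩, h⟩ := IsLocalizedModule.surj Z⁰ i.toLinearMap y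
  exact ⟨z, r, h⟩

theorem noZeroDivisors_of_isLocalizedModule [NoZeroDivisors R] (hi : Function.Injective i) :
    NoZeroDivisors A where
  eq_zero_or_eq_zero_of_mul_eq_zero {y y'} h := by
    obtain ⟨z, g, hg⟩ := exists_smul_eq_map i y
    obtain ⟨z', g', hg'⟩ := exists_smul_eq_map i y'
    have hprod : g * g' = 0 := hi <| by
      rw [map_mul, ← hg, ← hg', smul_mul_smul_comm, h, smul_zero, map_zero]
    refine (mul_eq_zero.1 hprod).imp (fun h₀ ↦ ?_) fun h₀ ↦ ?_
    · refine IsLocalizedModule.smul_injective i.toLinearMap z ?_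
      simp only [hg, h₀, map_zero, smul_zero]
    · refine IsLocalizedModule.smul_injective i.toLinearMap z' ?_
      simp only [hg', h₀, map_zero, smul_zero]

theorem isCentral_of_isLocalizedModule [Algebra.IsCentral Z R] (hi : Function.Injective i)
    (K : Type*) [Field K] [Algebra Z K] [IsFractionRing Z K] [Algebra K A] [IsScalarTower Z K A] :
    Algebra.IsCentral K A where
  out y hy := by
    obtain ⟨z, g, hg⟩ := exists_smul_eq_map i y
    have hcomm (r : R) : i r * i g = i g * i r := by
      rw [← hg, mul_smul_comm, smul_mul_assoc, Subalgebra.mem_center_iff.1 hy]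
    have hcentral : g ∈ Subalgebra.center Z R :=
      Subalgebra.mem_center_iff.2 fun r ↦ hi <| by simp only [map_mul, hcomm]
    obtain ⟨c, rfl⟩ := Algebra.mem_bot.1 (Algebra.IsCentral.out hcentral)
    refine Algebra.mem_bot.2 ⟨IsLocalization.mk' K c z,
      IsLocalizedModule.smul_injective i.toLinearMap z ?_⟩
    calc z • algebraMap K A (IsLocalization.mk' K c z)
        = algebraMap K A (algebraMap Z K z * IsLocalization.mk' K c z) := by
          rw [map_mul, ← IsScalarTower.algebraMap_apply, ← Algebra.smul_def, Submonoid.smul_def]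
      _ = z • y := by
          rw [IsLocalization.mk'_spec', ← IsScalarTower.algebraMap_apply, hg, AlgHom.commutes]

theorem det_mem_range_algebraMap_of_isDomain {K A L I : Type*} [Field K] [Ring A] [IsDomain A]
    [Algebra K A] [FiniteDimensional K A] [Algebra.IsCentral K A] [Field L] [Algebra K L]
    [Fintype I] [DecidableEq I] [Nonempty I]
    (hcard : Module.finrank K A = Fintype.card I * Fintype.card I) (ρ : A →ₐ[K] Matrix I I L)
    (f : A) : (ρ f).det ∈ Set.range (algebraMap K L) :=
  let := divisionRingOfFiniteDimensional K A
  det_mem_range_algebraMap hcard ρ f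

theorem exists_mul_det_eq_algebraMap {S I : Type*} [IsDomain Z] [IsDomain R] [Module.Free Z R]
    [Module.Finite Z R] [Algebra.IsCentral Z R] [Fintype I] [DecidableEq I] [Nonempty I]
    [CommRing S] [IsDomain S] [Algebra Z S] [FaithfulSMul Z S]
    (hcard : Module.finrank Z R = Fintype.card I * Fintype.card I) (ρ : R →ₐ[Z] Matrix I I S)
    (f : R) : ∃ a b : Z, b ≠ 0 ∧ algebraMap Z S b * (ρ f).det = algebraMap Z S a := by
  let K := FractionRing Z
  let L := FractionRing S
  let i : R →ₐ[Z] K ⊗[Z] R := Algebra.TensorProduct.includeRight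
  have hi : Function.Injective i :=
    Algebra.TensorProduct.includeRight_injective (IsFractionRing.injective Z K)
  have : IsLocalizedModule Z⁰ i.toLinearMap :=
    inferInstanceAs (IsLocalizedModule Z⁰ (TensorProduct.mk Z K R 1))
  have := noZeroDivisors_of_isLocalizedModule hi
  have : Nontrivial (K ⊗[Z] R) := hi.nontrivial
  have : IsDomain (K ⊗[Z] R) := NoZeroDivisors.to_isDomain _
  have := isCentral_of_isLocalizedModule hi K
  let : Algebra K L := FractionRing.liftAlgebra Z L
  let ρL : R →ₐ[Z] Matrix I I L := (IsScalarTower.toAlgHom Z S L).mapMatrix.comp ρ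
  have hfinrank : Module.finrank K (K ⊗[Z] R) = Fintype.card I * Fintype.card I :=
    Module.finrank_baseChange.trans hcard
  obtain ⟨c, hc⟩ := det_mem_range_algebraMap_of_isDomain hfinrank (scalarExtension ρL) (1 ⊗ₜ f)
  obtain ⟨a, b, hb, rfl⟩ := IsFractionRing.div_surjective (A := Z) c
  refine ⟨a, b, nonZeroDivisors.ne_zero hb, IsFractionRing.injective S L ?_⟩
  have hdet : algebraMap K L (algebraMap Z K a / algebraMap Z K b) = algebraMap S L (ρ f).det := by
    rw [hc, scalarExtension_tmul, one_smul, RingHom.map_det]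
    rfl
  have hb' := IsFractionRing.to_map_ne_zero_of_mem_nonZeroDivisors (K := K) hb
  rw [map_mul, ← hdet, ← IsScalarTower.algebraMap_apply, ← IsScalarTower.algebraMap_apply,
    IsScalarTower.algebraMap_apply Z K L, IsScalarTower.algebraMap_apply Z K L, ← map_mul,
    mul_div_cancel₀ _ hb']

end Orders

section RightRegularMatrix

variable (Z : Type*) {S R I : Type*} [CommRing Z] [CommRing S] [Ring R] [Algebra Z S] [Algebra Z R]
  [Module S R] [IsScalarTower S R R] [IsScalarTower Z S R] [Fintype I] [DecidableEq I]
  (b : Module.Basis I S R)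

/-- The matrix of right multiplication on `R` in an `S`-basis of row vectors. Since `S` acts from
the left, this is a homomorphism over any `Z → S` through which `Z` acts centrally. -/
noncomputable def rightRegularMatrix : R →ₐ[Z] Matrix I I S where
  toFun f := (LinearMap.toMatrix b b (LinearMap.mulRight S f)).transpose
  map_one' := by rw [LinearMap.mulRight_one, LinearMap.toMatrix_id, Matrix.transpose_one]
  map_mul' f g := by
    rw [LinearMap.mulRight_mul, LinearMap.toMatrix_comp b b b, Matrix.transpose_mul]
  map_zero' := by rw [LinearMap.mulRight_zero_eq_zero, map_zero, Matrix.transpose_zero]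
  map_add' f g := by
    rw [← Matrix.transpose_add, ← map_add]
    congr 2
    exact LinearMap.ext fun x ↦ mul_add x f g
  commutes' z := by
    have hscalar : LinearMap.mulRight S (algebraMap Z R z) = algebraMap Z S z • LinearMap.id := by
      ext x
      simp [← Algebra.commutes, ← Algebra.smul_def]
    rw [hscalar, map_smul, LinearMap.toMatrix_id, Matrix.transpose_smul, Matrix.transpose_one,
      algebraMap_smul, Algebra.algebraMap_eq_smul_one]

variable {b}

theorem rightRegularMatrix_apply (f : R) (i k : I) :
    rightRegularMatrix Z b f i k = b.repr (b i * f) k :=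
  LinearMap.toMatrix_apply ..

theorem rightRegularMatrix_eq_of_mul_eq_sum {f : R} {M : Matrix I I S}
    (hM : ∀ i, b i * f = ∑ k, M i k • b k) : rightRegularMatrix Z b f = M := by
  ext i k
  rw [rightRegularMatrix_apply, hM, b.repr_sum_self]

end RightRegularMatrix

section WeightedDet

open Polynomial

theorem mul_natDegree_det_le_of_weights {S I : Type*} [CommRing S] [Fintype I] [DecidableEq I]
    {M : Matrix I I S[X]} (w : I → ℕ) {n m : ℕ}
    (hM : ∀ i k, M i k ≠ 0 → n * (M i k).natDegree + w k ≤ w i + m) :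
    n * M.det.natDegree ≤ Fintype.card I * m := by
  obtain rfl | hn := n.eq_zero_or_pos
  · simp
  suffices M.det.natDegree ≤ Fintype.card I * m / n from
    (Nat.mul_le_mul_left n this).trans (Nat.mul_div_le _ _)
  rw [Matrix.det_apply]
  refine natDegree_sum_le_of_forall_le _ _ fun π _ ↦ (natDegree_smul_le _ _).trans ?_
  by_cases hzero : ∃ i, M (π i) i = 0
  · obtain ⟨i, hi⟩ := hzero
    have hprod : ∏ i, M (π i) i = 0 := Finset.prod_eq_zero (Finset.mem_univ i) hi
    simp only [hprod, natDegree_zero, zero_le]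
  push Not at hzero
  refine (natDegree_prod_le _ _).trans ((Nat.le_div_iff_mul_le hn).2 ?_)
  -- The weights telescope along the permutation.
  have hsum : ∑ i, (n * (M (π i) i).natDegree + w i) ≤ ∑ i, (w (π i) + m) :=
    Finset.sum_le_sum fun i _ ↦ hM _ _ (hzero i)
  rw [Finset.sum_add_distrib, Finset.sum_add_distrib, Equiv.sum_comp π w, ← Finset.mul_sum,
    Finset.sum_const, Finset.card_univ, smul_eq_mul] at hsum
  linarith

end WeightedDet

section SkewPolynomials

open Finset Polynomial

theorem mul_add_fin_eq_mul_add_fin_iff {n l l' : ℕ} {i i' : Fin n} :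
    n * l + i = n * l' + i' ↔ l = l' ∧ i = i' := by
  have : NeZero n := ⟨i.pos.ne'⟩
  simpa only [Nat.divModEquiv_symm_apply, mul_comm, Prod.mk_inj] using
    (Nat.divModEquiv n).symm.injective.eq_iff (a := (l, i)) (b := (l', i'))

/-- A presentation of `R` as the skew polynomial ring `D[t;σ]`, with `t a = σ(a) t`: every element
of `R` is a unique left linear combination of powers of `t`, whose coefficients `coeff` records. -/
structure SkewPolynomialPresentation {D : Type*} [Ring D] (σ : D ≃+* D) (R : Type*) [Ring R] where
  ι : D →+* R
  t : R
  t_mul_ι (a : D) : t * ι a = ι (σ a) * t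
  coeff : R →+ (ℕ →₀ D)
  coeff_ι_mul_t_pow (a : D) (i : ℕ) : coeff (ι a * t ^ i) = Finsupp.single i a
  sum_ι_mul_t_pow (f : R) : (coeff f).sum (fun i a ↦ ι a * t ^ i) = f

/-- `σ ^ n` is the inner automorphism of `u`, and `σ` fixes `u`. -/
structure IsInnerPower {D : Type*} [DivisionRing D] (σ : D ≃+* D) (n : ℕ) (u : D) : Prop where
  pos : 0 < n
  ne_zero : u ≠ 0
  map_eq : σ u = u
  pow_apply (z : D) : (σ ^ n) z = u * z * u⁻¹

theorem IsInnerPower.pow_mul_apply {D : Type*} [DivisionRing D] {σ : D ≃+* D} {n : ℕ} {u : D}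
    (h : IsInnerPower σ n u) (l : ℕ) (z : D) : (σ ^ (n * l)) z = u ^ l * z * (u ^ l)⁻¹ := by
  induction l with
  | zero => simp
  | succ l ih =>
    rw [mul_add, mul_one, add_comm, pow_add, RingAut.mul_apply, ih, h.pow_apply, pow_succ',
      mul_inv_rev]
    simp only [mul_assoc]

namespace SkewPolynomialPresentation

section Ring

variable {D R : Type*} [Ring D] [Ring R] {σ : D ≃+* D} (S : SkewPolynomialPresentation σ R)

theorem induction {P : R → Prop} (zero : P 0) (add : ∀ f g, P f → P g → P (f + g))
    (monomial : ∀ a i, P (S.ι a * S.t ^ i)) (f : R) : P f := by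
  rw [← S.sum_ι_mul_t_pow f]
  exact Finset.sum_induction _ P add zero fun i _ ↦ monomial _ i

theorem ext {f g : R} (h : ∀ k, S.coeff f k = S.coeff g k) : f = g := by
  rw [← S.sum_ι_mul_t_pow f, ← S.sum_ι_mul_t_pow g, Finsupp.ext h]

theorem t_pow_mul_ι (k : ℕ) (a : D) : S.t ^ k * S.ι a = S.ι ((σ ^ k) a) * S.t ^ k := by
  induction k with
  | zero => simp only [pow_zero, one_mul, mul_one, RingAut.one_apply]
  | succ k ih =>
    rw [pow_succ', mul_assoc, ih, ← mul_assoc, S.t_mul_ι, mul_assoc, pow_succ' σ, RingAut.mul_apply]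

theorem coeff_mul (f g : R) (k : ℕ) :
    S.coeff (f * g) k =
      ∑ p ∈ antidiagonal k, S.coeff f p.1 * (σ ^ p.1) (S.coeff g p.2) := by
  induction f using S.induction with
  | zero => simp
  | add f f' hf hf' => simp [add_mul, hf, hf', sum_add_distrib]
  | monomial a i =>
    induction g using S.induction with
    | zero => simp
    | add g g' hg hg' => simp [mul_add, hg, hg', sum_add_distrib]
    | monomial b j =>
      have hprod : S.ι a * S.t ^ i * (S.ι b * S.t ^ j) = S.ι (a * (σ ^ i) b) * S.t ^ (i + j) := by
        rw [mul_assoc, ← mul_assoc (S.t ^ i), S.t_pow_mul_ι, map_mul, pow_add]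
        simp only [mul_assoc]
      simp only [hprod, S.coeff_ι_mul_t_pow, Finsupp.single_apply]
      by_cases hk : i + j = k
      · rw [sum_eq_single_of_mem (i, j) (mem_antidiagonal.2 hk), if_pos hk, if_pos rfl, if_pos rfl]
        rintro ⟨i', j'⟩ - hne
        by_cases hi : i = i' <;> by_cases hj : j = j' <;> simp_all
      · rw [if_neg hk, sum_eq_zero]
        rintro ⟨i', j'⟩ hmem
        have := mem_antidiagonal.1 hmem
        by_cases hi : i = i' <;> by_cases hj : j = j' <;> simp_all

theorem coeff_ι_mul (a : D) (g : R) (k : ℕ) : S.coeff (S.ι a * g) k = a * S.coeff g k := by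
  have h := S.coeff_ι_mul_t_pow a 0
  rw [pow_zero, mul_one] at h
  rw [coeff_mul, h, sum_eq_single_of_mem (0, k) (by simp)]
  · simp
  · rintro ⟨i, j⟩ hmem hne
    have : i ≠ 0 := by
      rintro rfl
      simp_all
    simp [this.symm]

theorem coeff_mul_ι (a : D) (g : R) (k : ℕ) :
    S.coeff (g * S.ι a) k = S.coeff g k * (σ ^ k) a := by
  induction g using S.induction with
  | zero => simp
  | add f g hf hg => simp [add_mul, hf, hg]
  | monomial b i =>
    rw [mul_assoc, S.t_pow_mul_ι, ← mul_assoc, ← map_mul, S.coeff_ι_mul_t_pow, S.coeff_ι_mul_t_pow]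
    by_cases h : i = k <;> simp [h]

theorem coeff_mul_t (g : R) (k : ℕ) : S.coeff (g * S.t) (k + 1) = S.coeff g k := by
  induction g using S.induction with
  | zero => simp
  | add f g hf hg => simp [add_mul, hf, hg]
  | monomial b i => simp [mul_assoc, ← pow_succ, S.coeff_ι_mul_t_pow, Finsupp.single_apply]

theorem coeff_t_mul (g : R) (k : ℕ) : S.coeff (S.t * g) (k + 1) = σ (S.coeff g k) := by
  induction g using S.induction with
  | zero => simp
  | add f g hf hg => simp [mul_add, hf, hg]
  | monomial b i =>
    rw [← mul_assoc, S.t_mul_ι, mul_assoc, ← pow_succ', S.coeff_ι_mul_t_pow, S.coeff_ι_mul_t_pow]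
    by_cases h : i = k <;> simp [h]

/-- The degree in `t`, with the convention that `0` has degree `0`. -/
noncomputable def natDegree (f : R) : ℕ := (S.coeff f).support.sup id

theorem coeff_eq_zero_of_natDegree_lt {f : R} {k : ℕ} (h : S.natDegree f < k) :
    S.coeff f k = 0 := by
  by_contra hk
  exact (le_sup (f := id) (Finsupp.mem_support_iff.2 hk)).not_gt h

theorem natDegree_le_iff {f : R} {m : ℕ} :
    S.natDegree f ≤ m ↔ ∀ k, m < k → S.coeff f k = 0 := by
  refine ⟨fun h k hk ↦ S.coeff_eq_zero_of_natDegree_lt (h.trans_lt hk), fun h ↦ ?_⟩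
  refine Finset.sup_le fun k hk ↦ ?_
  by_contra! hmk
  exact Finsupp.mem_support_iff.1 hk (h k hmk)

theorem natDegree_eq_of_le_of_coeff_ne_zero {f : R} {m : ℕ} (hle : S.natDegree f ≤ m)
    (hm : S.coeff f m ≠ 0) : S.natDegree f = m :=
  hle.antisymm (not_lt.1 fun h ↦ hm (S.coeff_eq_zero_of_natDegree_lt h))

theorem coeff_natDegree_ne_zero {f : R} (hf : f ≠ 0) : S.coeff f (S.natDegree f) ≠ 0 := by
  have hsupp : (S.coeff f).support.Nonempty := Finsupp.support_nonempty_iff.2 fun h ↦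
    hf (S.ext fun k ↦ by rw [h, map_zero])
  obtain ⟨k, hk, hsup⟩ := exists_mem_eq_sup _ hsupp id
  rw [natDegree, hsup]
  exact Finsupp.mem_support_iff.1 hk

theorem natDegree_mul_le (f g : R) : S.natDegree (f * g) ≤ S.natDegree f + S.natDegree g := by
  refine S.natDegree_le_iff.2 fun k hk ↦ ?_
  rw [coeff_mul]
  refine sum_eq_zero fun p hp ↦ ?_
  rw [← mem_antidiagonal.1 hp] at hk
  obtain h | h : S.natDegree f < p.1 ∨ S.natDegree g < p.2 := by omega
  · rw [S.coeff_eq_zero_of_natDegree_lt h, zero_mul]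
  · rw [S.coeff_eq_zero_of_natDegree_lt h, map_zero, mul_zero]

theorem coeff_mul_natDegree_add (f g : R) :
    S.coeff (f * g) (S.natDegree f + S.natDegree g) =
      S.coeff f (S.natDegree f) * (σ ^ S.natDegree f) (S.coeff g (S.natDegree g)) := by
  rw [coeff_mul, sum_eq_single_of_mem (S.natDegree f, S.natDegree g) (mem_antidiagonal.2 rfl)]
  rintro ⟨i, j⟩ hmem hne
  have hadd := mem_antidiagonal.1 hmem
  obtain h | h : S.natDegree f < i ∨ S.natDegree g < j := by
    by_contra! hle
    exact hne (Prod.ext (by grind) (by grind))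
  · rw [S.coeff_eq_zero_of_natDegree_lt h, zero_mul]
  · rw [S.coeff_eq_zero_of_natDegree_lt h, map_zero, mul_zero]

theorem coeff_mul_natDegree_add_ne_zero [NoZeroDivisors D] {f g : R} (hf : f ≠ 0) (hg : g ≠ 0) :
    S.coeff (f * g) (S.natDegree f + S.natDegree g) ≠ 0 := by
  rw [coeff_mul_natDegree_add]
  exact mul_ne_zero (S.coeff_natDegree_ne_zero hf)
    ((map_ne_zero_iff _ (σ ^ _).injective).2 (S.coeff_natDegree_ne_zero hg))

theorem natDegree_mul [NoZeroDivisors D] {f g : R} (hf : f ≠ 0) (hg : g ≠ 0) :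
    S.natDegree (f * g) = S.natDegree f + S.natDegree g :=
  S.natDegree_eq_of_le_of_coeff_ne_zero (S.natDegree_mul_le f g)
    (S.coeff_mul_natDegree_add_ne_zero hf hg)

theorem nontrivial (S : SkewPolynomialPresentation σ R) [Nontrivial D] : Nontrivial R := by
  refine ⟨1, 0, fun h ↦ one_ne_zero (α := D) ?_⟩
  have hcoeff := S.coeff_ι_mul_t_pow 1 0
  rw [map_one, pow_zero, mul_one, h, map_zero] at hcoeff
  exact Finsupp.single_eq_zero.1 hcoeff.symm

theorem isDomain (S : SkewPolynomialPresentation σ R) [IsDomain D] : IsDomain R :=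
  have := S.nontrivial
  have : NoZeroDivisors R := ⟨fun {f g} h ↦ by
    by_contra! hne
    apply S.coeff_mul_natDegree_add_ne_zero hne.1 hne.2
    rw [h, map_zero, Finsupp.zero_apply]⟩
  NoZeroDivisors.to_isDomain R

end Ring

section InnerPower

variable {D R : Type*} [DivisionRing D] [Ring R] {σ : D ≃+* D}
  (S : SkewPolynomialPresentation σ R) {n : ℕ} {u : D}

/-- The central element `x = u⁻¹ t ^ n` of `D[t;σ]`. -/
def centralVar (n : ℕ) (u : D) : R := S.ι u⁻¹ * S.t ^ n

theorem centralVar_commute (h : IsInnerPower σ n u) (g : R) : Commute (S.centralVar n u) g := by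
  have hι (a : D) : Commute (S.centralVar n u) (S.ι a) := by
    rw [commute_iff_eq, centralVar, mul_assoc, S.t_pow_mul_ι, h.pow_apply, ← mul_assoc, ← mul_assoc,
      ← map_mul, ← map_mul, mul_assoc u, inv_mul_cancel_left₀ h.ne_zero]
  have ht : Commute (S.centralVar n u) S.t := by
    rw [commute_iff_eq, centralVar, ← mul_assoc, S.t_mul_ι, map_inv₀ σ, h.map_eq, mul_assoc,
      mul_assoc, (Commute.refl S.t).pow_left n]
  induction g using S.induction with
  | zero => exact Commute.zero_right _
  | add f g hf hg => exact hf.add_right hg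
  | monomial a i => exact (hι a).mul_right (ht.pow_right i)

theorem centralVar_pow (h : IsInnerPower σ n u) (l : ℕ) :
    S.centralVar n u ^ l = S.ι (u⁻¹ ^ l) * S.t ^ (n * l) := by
  have hcomm : Commute (S.ι u⁻¹) (S.t ^ n) := by
    rw [commute_iff_eq, S.t_pow_mul_ι, h.pow_apply, mul_inv_cancel₀ h.ne_zero, one_mul]
  rw [centralVar, hcomm.mul_pow, map_pow, pow_mul]

section PolyEval

variable (B : Type*) [Semiring B] [Module B D] [IsScalarTower B D D] (h : IsInnerPower σ n u)

/-- The ring homomorphism `B[X] →+* D[t;σ]`, `∑ aᵢ Xⁱ ↦ ∑ aᵢ xⁱ`, for a ring `B` acting on `D`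
through a ring homomorphism `B →+* D`, written `a ↦ a • 1`. -/
noncomputable def polyEval : B[X] →+* R :=
  eval₂RingHom' (S.ι.comp RingHom.smulOneHom) (S.centralVar n u)
    fun _ ↦ (S.centralVar_commute h _).symm

variable {B}

theorem polyEval_eq_sum (p : B[X]) :
    S.polyEval B h p = p.sum fun l a ↦ S.ι (a • 1) * S.centralVar n u ^ l :=
  eval₂_eq_sum

theorem polyEval_monomial (l : ℕ) (a : B) :
    S.polyEval B h (monomial l a) = S.ι (a • 1) * S.centralVar n u ^ l :=
  eval₂_monomial _ _

theorem polyEval_monomial_mul (l : ℕ) (a : B) (b : D) (i : ℕ) :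
    S.polyEval B h (monomial l a) * (S.ι b * S.t ^ i) =
      S.ι (a • b * u⁻¹ ^ l) * S.t ^ (n * l + i) := by
  rw [polyEval_monomial, ← mul_assoc, mul_assoc (S.ι _), ((S.centralVar_commute h _).pow_left l).eq,
    S.centralVar_pow h, ← mul_assoc, ← mul_assoc, ← map_mul, ← map_mul, mul_assoc (S.ι _),
    ← pow_add, smul_one_mul]

theorem coeff_polyEval_mul (p : B[X]) (b : D) (i i' : Fin n) (l : ℕ) :
    S.coeff (S.polyEval B h p * (S.ι b * S.t ^ (i : ℕ))) (n * l + i') =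
      if i = i' then p.coeff l • b * u⁻¹ ^ l else 0 := by
  induction p using Polynomial.induction_on' with
  | add p q hp hq =>
    rw [map_add (S.polyEval B h), add_mul, map_add S.coeff, Finsupp.add_apply, hp, hq]
    split_ifs <;> simp [add_smul, add_mul]
  | monomial l' a =>
    rw [polyEval_monomial_mul, S.coeff_ι_mul_t_pow, Finsupp.single_apply, coeff_monomial]
    simp only [mul_add_fin_eq_mul_add_fin_iff]
    by_cases hl : l' = l <;> by_cases hi : i = i' <;> simp [hl, hi]

end PolyEval

section Basis

variable {B J : Type*} [Ring B] [Module B D] [IsScalarTower B D D] [Fintype J]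
  (h : IsInnerPower σ n u)

theorem coeff_sum_polyEval_mul (p : J × Fin n → B[X]) (e : J → D) (i : Fin n) (l : ℕ) :
    S.coeff (∑ k, S.polyEval B h (p k) * (S.ι (e k.1) * S.t ^ (k.2 : ℕ))) (n * l + i) =
      (∑ c, (p (c, i)).coeff l • e c) * u⁻¹ ^ l := by
  simp only [map_sum, Finsupp.finsetSum_apply, coeff_polyEval_mul, Fintype.sum_prod_type,
    sum_ite_eq', mem_univ, if_true, sum_mul]

theorem exists_sum_polyEval_mul_eq (e : Module.Basis J B D) (f : R) :
    ∃ p : J × Fin n → B[X],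
      ∑ k, S.polyEval B h (p k) * (S.ι (e k.1) * S.t ^ (k.2 : ℕ)) = f := by
  induction f using S.induction with
  | zero => exact ⟨0, by simp⟩
  | add f g hf hg =>
    obtain ⟨p, rfl⟩ := hf
    obtain ⟨q, rfl⟩ := hg
    exact ⟨p + q, by simp [add_mul, sum_add_distrib]⟩
  | monomial a m =>
    let i : Fin n := ⟨m % n, Nat.mod_lt _ h.pos⟩
    let w := e.repr (a * u ^ (m / n))
    refine ⟨fun k ↦ if k.2 = i then monomial (m / n) (w k.1) else 0, ?_⟩
    have hterm (c : J) : ∑ i', S.polyEval B h (if i' = i then monomial (m / n) (w c) else 0) *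
        (S.ι (e c) * S.t ^ (i' : ℕ)) = S.ι (w c • e c * u⁻¹ ^ (m / n)) * S.t ^ m := by
      rw [sum_eq_single_of_mem i (mem_univ i) fun i' _ hi ↦ by
        rw [if_neg hi, map_zero, zero_mul], if_pos rfl, polyEval_monomial_mul, Nat.div_add_mod]
    rw [Fintype.sum_prod_type]
    simp only [hterm]
    rw [← sum_mul, ← map_sum, ← sum_mul, e.sum_repr, inv_pow,
      mul_inv_cancel_right₀ (pow_ne_zero _ h.ne_zero)]

variable [Module B[X] R] (hsmul : ∀ (p : B[X]) (f : R), p • f = S.polyEval B h p * f)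

/-- A `B`-basis `e` of `D` yields the basis `e c * t ^ i`, `i < n`, of `D[t;σ]` over `B[x]`. -/
noncomputable def basis (e : Module.Basis J B D) : Module.Basis (J × Fin n) B[X] R :=
  .mk (v := fun k ↦ S.ι (e k.1) * S.t ^ (k.2 : ℕ))
    (Fintype.linearIndependent_iff.2 fun p hp k ↦ by
      ext l
      have hcoeff := S.coeff_sum_polyEval_mul h p e k.2 l
      simp only [hsmul] at hp
      rw [hp, map_zero, Finsupp.zero_apply, eq_comm] at hcoeff
      have hzero := (mul_eq_zero.1 hcoeff).resolve_right (pow_ne_zero _ (inv_ne_zero h.ne_zero))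
      exact Fintype.linearIndependent_iff.1 e.linearIndependent _ hzero k.1)
    (fun f _ ↦ by
      obtain ⟨p, rfl⟩ := S.exists_sum_polyEval_mul_eq h e f
      exact sum_mem fun k _ ↦ hsmul (p k) _ ▸ Submodule.smul_mem _ _
        (Submodule.subset_span ⟨k, rfl⟩))

theorem basis_apply (e : Module.Basis J B D) (k : J × Fin n) :
    S.basis h hsmul e k = S.ι (e k.1) * S.t ^ (k.2 : ℕ) :=
  Module.Basis.mk_apply ..

theorem mul_natDegree_repr_basis_add_le (e : Module.Basis J B D) (f : R) {k : J × Fin n}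
    (hk : (S.basis h hsmul e).repr f k ≠ 0) :
    n * ((S.basis h hsmul e).repr f k).natDegree + k.2 ≤ S.natDegree f := by
  set p := (S.basis h hsmul e).repr f
  have hf : ∑ k, S.polyEval B h (p k) * (S.ι (e k.1) * S.t ^ (k.2 : ℕ)) = f := by
    simpa only [basis_apply, hsmul] using (S.basis h hsmul e).sum_repr f
  by_contra! hlt
  have hcoeff := S.coeff_sum_polyEval_mul h p e k.2 (p k).natDegree
  rw [hf, S.coeff_eq_zero_of_natDegree_lt hlt, eq_comm] at hcoeff
  have hzero := (mul_eq_zero.1 hcoeff).resolve_right (pow_ne_zero _ (inv_ne_zero h.ne_zero))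
  exact hk (leadingCoeff_eq_zero.1
    (Fintype.linearIndependent_iff.1 e.linearIndependent _ hzero k.1))

end Basis

section Coefficients

variable {B : Type*} [Semiring B] [Module B D] [IsScalarTower B D D] (h : IsInnerPower σ n u)

theorem coeff_polyEval_mul_ι (p : B[X]) (a : D) (l : ℕ) :
    S.coeff (S.polyEval B h p * S.ι a) (n * l) = p.coeff l • a * u⁻¹ ^ l := by
  simpa using S.coeff_polyEval_mul h p a ⟨0, h.pos⟩ ⟨0, h.pos⟩ l

theorem coeff_polyEval (p : B[X]) (l : ℕ) :
    S.coeff (S.polyEval B h p) (n * l) = p.coeff l • 1 * u⁻¹ ^ l := by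
  simpa using S.coeff_polyEval_mul_ι h p 1 l

theorem coeff_polyEval_of_not_dvd (p : B[X]) {k : ℕ} (hk : ¬n ∣ k) :
    S.coeff (S.polyEval B h p) k = 0 := by
  have hmod : (⟨0, h.pos⟩ : Fin n) ≠ ⟨k % n, Nat.mod_lt _ h.pos⟩ := fun heq ↦
    hk (Nat.dvd_of_mod_eq_zero (Fin.val_eq_of_eq heq).symm)
  have hcoeff := S.coeff_polyEval_mul h p 1 ⟨0, h.pos⟩ ⟨k % n, Nat.mod_lt _ h.pos⟩ (k / n)
  rwa [if_neg hmod, pow_zero, map_one, mul_one, mul_one, Nat.div_add_mod] at hcoeff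

theorem natDegree_polyEval [IsDomain B] [Module.IsTorsionFree B D] (p : B[X]) :
    S.natDegree (S.polyEval B h p) = n * p.natDegree := by
  obtain rfl | hp := eq_or_ne p 0
  · simp [natDegree]
  refine S.natDegree_eq_of_le_of_coeff_ne_zero (S.natDegree_le_iff.2 fun k hk ↦ ?_) ?_
  · by_cases hdvd : n ∣ k
    · obtain ⟨l, rfl⟩ := hdvd
      rw [coeff_polyEval, Polynomial.coeff_eq_zero_of_natDegree_lt (Nat.lt_of_mul_lt_mul_left hk),
        zero_smul, zero_mul]
    · exact S.coeff_polyEval_of_not_dvd h p hdvd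
  · rw [coeff_polyEval]
    exact mul_ne_zero (smul_ne_zero (leadingCoeff_ne_zero.2 hp) one_ne_zero)
      (pow_ne_zero _ (inv_ne_zero h.ne_zero))

theorem coeff_smul_one_mem_center {p : B[X]} (hp : ∀ f, Commute (S.polyEval B h p) f) (l : ℕ) :
    p.coeff l • (1 : D) ∈ Subring.center D := by
  refine Subring.mem_center_iff.2 fun a ↦
    mul_right_cancel₀ (pow_ne_zero l (inv_ne_zero h.ne_zero)) ?_
  rw [mul_assoc, ← S.coeff_polyEval h, ← coeff_ι_mul, ← (hp (S.ι a)).eq, coeff_polyEval_mul_ι,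
    smul_one_mul]

theorem map_coeff_smul_one {p : B[X]} (hp : ∀ f, Commute (S.polyEval B h p) f) (l : ℕ) :
    σ (p.coeff l • (1 : D)) = p.coeff l • 1 := by
  refine mul_right_cancel₀ (pow_ne_zero l (inv_ne_zero h.ne_zero)) ?_
  have hσu : σ (u⁻¹ ^ l) = u⁻¹ ^ l := by rw [map_pow, map_inv₀, h.map_eq]
  rw [← S.coeff_polyEval h, ← coeff_mul_t, (hp S.t).eq, coeff_t_mul, S.coeff_polyEval, map_mul, hσu]

end Coefficients

section Center

variable {f : R}

theorem mul_coeff_of_commute (hf : ∀ g, Commute f g) (k : ℕ) (a : D) :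
    a * S.coeff f k = S.coeff f k * (σ ^ k) a := by
  rw [← coeff_ι_mul, ← (hf (S.ι a)).eq, coeff_mul_ι]

theorem map_coeff_of_commute (hf : ∀ g, Commute f g) (k : ℕ) :
    σ (S.coeff f k) = S.coeff f k := by
  rw [← coeff_t_mul, ← (hf S.t).eq, coeff_mul_t]

theorem pow_apply_of_coeff_ne_zero (hf : ∀ g, Commute f g) {k : ℕ} (hk : S.coeff f k ≠ 0) {z : D}
    (hz : z ∈ Subring.center D) : (σ ^ k) z = z := by
  refine mul_left_cancel₀ hk ?_
  rw [← S.mul_coeff_of_commute hf, Subring.mem_center_iff.1 hz]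

theorem coeff_mul_pow_mem_center (h : IsInnerPower σ n u) (hf : ∀ g, Commute f g) (l : ℕ) :
    S.coeff f (n * l) * u ^ l ∈ Subring.center D := by
  refine Subring.mem_center_iff.2 fun a ↦ ?_
  rw [← mul_assoc, S.mul_coeff_of_commute hf, h.pow_mul_apply, mul_assoc,
    inv_mul_cancel_right₀ (pow_ne_zero l h.ne_zero), mul_assoc]

theorem map_coeff_mul_pow (h : IsInnerPower σ n u) (hf : ∀ g, Commute f g) (l : ℕ) :
    σ (S.coeff f (n * l) * u ^ l) = S.coeff f (n * l) * u ^ l := by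
  rw [map_mul, S.map_coeff_of_commute hf, map_pow, h.map_eq]

theorem exists_polyEval_eq_of_commute {F : Type*} [CommSemiring F] [Algebra F D]
    (h : IsInnerPower σ n u)
    (hdvd : ∀ k, (∀ z ∈ Subring.center D, (σ ^ k) z = z) → n ∣ k)
    (hfixed : ∀ z ∈ Subring.center D, σ z = z → z ∈ Set.range (algebraMap F D))
    (hf : ∀ g, Commute f g) : ∃ p : F[X], S.polyEval F h p = f := by
  choose c hc using fun l ↦ hfixed _ (S.coeff_mul_pow_mem_center h hf l)
    (S.map_coeff_mul_pow h hf l)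
  refine ⟨∑ l ∈ range (S.natDegree f + 1), monomial l (c l), S.ext fun k ↦ ?_⟩
  by_cases hk : n ∣ k
  · obtain ⟨l, rfl⟩ := hk
    rw [coeff_polyEval, ← Algebra.algebraMap_eq_smul_one]
    simp only [finsetSum_coeff, coeff_monomial, sum_ite_eq', mem_range, Nat.lt_succ_iff]
    split_ifs with hl
    · rw [hc, inv_pow, mul_inv_cancel_right₀ (pow_ne_zero l h.ne_zero)]
    · rw [map_zero, zero_mul, S.coeff_eq_zero_of_natDegree_lt]
      exact (not_le.1 hl).trans_le (Nat.le_mul_of_pos_left l h.pos)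
  · rw [S.coeff_polyEval_of_not_dvd h _ hk]
    by_contra hne
    exact hk (hdvd k fun z hz ↦ S.pow_apply_of_coeff_ne_zero hf (Ne.symm hne) hz)

end Center

section CentralPolynomials

variable {F E J : Type*} [Field F] [Field E] [Algebra F D] (h : IsInnerPower σ n u)

theorem commute_polyEval (hfix : ∀ c, σ (algebraMap F D c) = algebraMap F D c) (p : F[X]) (f : R) :
    Commute (S.polyEval F h p) f := by
  have hscalar (c : F) (g : R) : Commute (S.ι (c • 1)) g := by
    rw [← Algebra.algebraMap_eq_smul_one]
    induction g using S.induction with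
    | zero => exact Commute.zero_right _
    | add f g hf hg => exact hf.add_right hg
    | monomial a i =>
      refine Commute.mul_right ((Algebra.commute_algebraMap_left c a).map S.ι)
        (Commute.pow_right ?_ i)
      rw [commute_iff_eq, S.t_mul_ι, hfix]
  rw [polyEval_eq_sum]
  exact Commute.sum_left _ _ _ fun l _ ↦
    (hscalar _ f).mul_left ((S.centralVar_commute h f).pow_left l)

theorem polyEval_map [Algebra F E] [Module E D] [IsScalarTower E D D] [IsScalarTower F E D]
    (p : F[X]) : S.polyEval E h (p.map (algebraMap F E)) = S.polyEval F h p := by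
  induction p using Polynomial.induction_on' with
  | add p q hp hq => rw [Polynomial.map_add, map_add, hp, hq, map_add]
  | monomial l c =>
    rw [map_monomial, polyEval_monomial, polyEval_monomial, algebraMap_smul]

variable [Algebra F[X] R]

theorem isCentral_polynomial (hF : ∀ p, algebraMap F[X] R p = S.polyEval F h p)
    (hdvd : ∀ k, (∀ z ∈ Subring.center D, (σ ^ k) z = z) → n ∣ k)
    (hfixed : ∀ z ∈ Subring.center D, σ z = z → z ∈ Set.range (algebraMap F D)) :
    Algebra.IsCentral F[X] R where
  out f hf := by
    obtain ⟨p, rfl⟩ := S.exists_polyEval_eq_of_commute h hdvd hfixed fun g ↦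
      (Subalgebra.mem_center_iff.1 hf g).symm
    exact ⟨p, hF p⟩

variable [FiniteDimensional F D]

/-- The `F[x]`-basis `e c * t ^ i`, `i < n`, of `D[t;σ]`, for some `F`-basis `e` of `D`. -/
noncomputable def finBasis (hF : ∀ p, algebraMap F[X] R p = S.polyEval F h p) :
    Module.Basis (Fin (Module.finrank F D) × Fin n) F[X] R :=
  S.basis h (fun p f ↦ by rw [Algebra.smul_def, hF]) (Module.finBasis F D)

theorem finrank_polynomial (hF : ∀ p, algebraMap F[X] R p = S.polyEval F h p) :
    Module.finrank F[X] R = Module.finrank F D * n := by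
  rw [Module.finrank_eq_card_basis (S.finBasis h hF), Fintype.card_prod, Fintype.card_fin,
    Fintype.card_fin]

theorem exists_mul_eq_algebraMap (hF : ∀ p, algebraMap F[X] R p = S.polyEval F h p) {f : R}
    (hf : f ≠ 0) : ∃ g ≠ 0, ∃ q ≠ 0, f * g = algebraMap F[X] R q := by
  have := S.isDomain
  have := Module.Free.of_basis (S.finBasis h hF)
  have := Module.Finite.of_basis (S.finBasis h hF)
  have halg : IsAlgebraic F[X] f := (Algebra.IsIntegral.isIntegral f).isAlgebraic
  obtain ⟨q, hq, g, hg⟩ := halg.exists_nonzero_dvd (mem_nonZeroDivisors_of_ne_zero hf)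
  have hq' : algebraMap F[X] R q ≠ 0 :=
    (map_ne_zero_iff _ (FaithfulSMul.algebraMap_injective F[X] R)).2 hq
  rw [hg] at hq'
  exact ⟨g, right_ne_zero_of_mul hq', q, hq, hg.symm⟩

end CentralPolynomials

section ReducedNorm

attribute [local instance] Polynomial.algebra

variable (F : Type*) {E J : Type*} [Field F] [Field E] [Algebra F E] [Module E D]
  [IsScalarTower E D D] [Fintype J] [DecidableEq J] [Algebra F[X] R] [Module E[X] R]
  [IsScalarTower E[X] R R] [IsScalarTower F[X] E[X] R] (h : IsInnerPower σ n u)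
  (hE : ∀ (p : E[X]) (f : R), p • f = S.polyEval E h p * f) (e : Module.Basis J E D)

/-- The reduced norm of `D(t;σ)` on `D[t;σ]`: the determinant of the representation by right
multiplication in the `E[x]`-basis `e c * t ^ i`, `i < n`. -/
noncomputable def reducedNorm : R →* E[X] :=
  Matrix.detMonoidHom.comp (rightRegularMatrix F[X] (S.basis h hE e)).toRingHom.toMonoidHom

theorem reducedNorm_algebraMap (q : F[X]) :
    S.reducedNorm F h hE e (algebraMap F[X] R q) =
      q.map (algebraMap F E) ^ (Fintype.card J * n) := by
  change (rightRegularMatrix F[X] (S.basis h hE e) _).det = _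
  rw [AlgHom.commutes, Matrix.algebraMap_eq_diagonal, Matrix.det_diagonal, Pi.algebraMap_def,
    prod_const, card_univ, Fintype.card_prod, Fintype.card_fin]
  rfl

theorem natDegree_reducedNorm_le (f : R) :
    (S.reducedNorm F h hE e f).natDegree ≤ Fintype.card J * S.natDegree f := by
  refine Nat.le_of_mul_le_mul_left ?_ h.pos
  have hweights := mul_natDegree_det_le_of_weights (n := n) (m := S.natDegree f)
    (M := rightRegularMatrix F[X] (S.basis h hE e) f) (fun k ↦ (k.2 : ℕ)) fun i k hik ↦ by
      rw [rightRegularMatrix_apply] at hik ⊢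
      refine (S.mul_natDegree_repr_basis_add_le h hE e _ hik).trans
        ((S.natDegree_mul_le _ f).trans (Nat.add_le_add_right ?_ _))
      rw [basis_apply]
      refine S.natDegree_le_iff.2 fun l hl ↦ ?_
      rw [S.coeff_ι_mul_t_pow, Finsupp.single_eq_of_ne' hl.ne]
  rwa [Fintype.card_prod, Fintype.card_fin, mul_comm _ n, mul_assoc] at hweights

variable [Algebra F D] [FiniteDimensional F D]

theorem natDegree_reducedNorm (hF : ∀ p, algebraMap F[X] R p = S.polyEval F h p) {f : R}
    (hf : f ≠ 0) : (S.reducedNorm F h hE e f).natDegree = Fintype.card J * S.natDegree f := by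
  obtain ⟨g, hg, q, hq, hfg⟩ := S.exists_mul_eq_algebraMap h hF hf
  have hmul : S.reducedNorm F h hE e f * S.reducedNorm F h hE e g =
      q.map (algebraMap F E) ^ (Fintype.card J * n) := by
    rw [← map_mul, hfg, reducedNorm_algebraMap]
  have hnorm : S.reducedNorm F h hE e f * S.reducedNorm F h hE e g ≠ 0 := by
    rw [hmul]
    exact pow_ne_zero _ ((Polynomial.map_ne_zero_iff (algebraMap F E).injective).2 hq)
  have hnormDegree := congrArg Polynomial.natDegree hmul
  rw [Polynomial.natDegree_mul (left_ne_zero_of_mul hnorm) (right_ne_zero_of_mul hnorm),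
    natDegree_pow, natDegree_map] at hnormDegree
  have hdegree := congrArg S.natDegree hfg
  rw [S.natDegree_mul hf hg, hF, S.natDegree_polyEval] at hdegree
  rw [mul_assoc, ← hdegree, mul_add] at hnormDegree
  have hlef := S.natDegree_reducedNorm_le F h hE e f
  have hleg := S.natDegree_reducedNorm_le F h hE e g
  omega

theorem commute_polyEval_reducedNorm [IsScalarTower F E D] [Nonempty J]
    (hF : ∀ p, algebraMap F[X] R p = S.polyEval F h p)
    (hdvd : ∀ k, (∀ z ∈ Subring.center D, (σ ^ k) z = z) → n ∣ k)
    (hfixed : ∀ z ∈ Subring.center D, σ z = z → z ∈ Set.range (algebraMap F D))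
    (hfinrank : Module.finrank F D = n * (Fintype.card J * Fintype.card J)) (f g : R) :
    Commute (S.polyEval E h (S.reducedNorm F h hE e f)) g := by
  have := S.isDomain
  have := S.isCentral_polynomial h hF hdvd hfixed
  have := Module.Free.of_basis (S.finBasis h hF)
  have := Module.Finite.of_basis (S.finBasis h hF)
  have : NeZero n := ⟨h.pos.ne'⟩
  obtain ⟨a, b, hb, hab⟩ := exists_mul_det_eq_algebraMap (I := J × Fin n)
    (by rw [S.finrank_polynomial h hF, hfinrank, Fintype.card_prod, Fintype.card_fin]; ring)
    (rightRegularMatrix F[X] (S.basis h hE e)) f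
  have hmul : algebraMap F[X] R b * S.polyEval E h (S.reducedNorm F h hE e f) =
      algebraMap F[X] R a := by
    rw [hF, hF, ← S.polyEval_map (E := E), ← S.polyEval_map (E := E), ← map_mul]
    exact congrArg _ hab
  have hb' : algebraMap F[X] R b ≠ 0 :=
    (map_ne_zero_iff _ (FaithfulSMul.algebraMap_injective F[X] R)).2 hb
  refine mul_left_cancel₀ hb' ?_
  rw [← mul_assoc, hmul, ← mul_assoc, Algebra.commutes b, mul_assoc, hmul, Algebra.commutes]

end ReducedNorm

end InnerPower

theorem injective_ι_mul_t_pow {D R J : Type*} [Ring D] [Ring R] {σ : D ≃+* D}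
    (S : SkewPolynomialPresentation σ R) {n : ℕ} {e : J → D} (he : Function.Injective e)
    (hne : ∀ c, e c ≠ 0) :
    Function.Injective fun k : J × Fin n ↦ S.ι (e k.1) * S.t ^ (k.2 : ℕ) := by
  rintro ⟨c, i⟩ ⟨c', i'⟩ heq
  have hsingle := congrArg S.coeff heq
  simp only [S.coeff_ι_mul_t_pow] at hsingle
  obtain ⟨hi, hc⟩ | ⟨hc, -⟩ := Finsupp.single_eq_single_iff _ _ _ _ |>.1 hsingle
  · exact Prod.ext (he hc) (Fin.ext hi)
  · exact absurd hc (hne c)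

end SkewPolynomialPresentation

end SkewPolynomials

section FixedCenter

theorem mem_fixedPoints_zpowers_iff {C : Type*} [Field C] {τ : RingAut C} {c : C} :
    c ∈ FixedPoints.subfield (Subgroup.zpowers τ) C ↔ τ c = c := by
  refine ⟨fun h ↦ h ⟨τ, Subgroup.mem_zpowers τ⟩, fun h g ↦ ?_⟩
  have hle : Subgroup.zpowers τ ≤ MulAction.stabilizer (RingAut C) c := Subgroup.zpowers_le.2 h
  exact hle g.2

theorem finrank_fixedPoints_zpowers {C : Type*} [Field C] {τ : RingAut C} (hτ : IsOfFinOrder τ) :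
    Module.finrank (FixedPoints.subfield (Subgroup.zpowers τ) C) C = orderOf τ := by
  have : Finite (Subgroup.zpowers τ) := hτ.finite_zpowers
  have := Fintype.ofFinite (Subgroup.zpowers τ)
  rw [FixedPoints.finrank_eq_card, ← Nat.card_eq_fintype_card, Nat.card_zpowers]

variable {D : Type*} [DivisionRing D] (σ : D ≃+* D)

/-- The restriction of an automorphism to the center. -/
def centerAut : RingAut (Subring.center D) := Subring.centerCongr σ

theorem coe_centerAut_pow_apply (m : ℕ) (c : Subring.center D) :
    ((centerAut σ ^ m) c : D) = (σ ^ m) c := by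
  induction m generalizing c with
  | zero => rfl
  | succ m ih =>
    rw [pow_succ, pow_succ]
    exact ih (centerAut σ c)

theorem centerAut_pow_eq_one_iff {m : ℕ} :
    centerAut σ ^ m = 1 ↔ ∀ z ∈ Subring.center D, (σ ^ m) z = z := by
  refine ⟨fun h z hz ↦ ?_, fun h ↦ RingEquiv.ext fun c ↦ Subtype.ext ?_⟩
  · rw [← coe_centerAut_pow_apply σ m ⟨z, hz⟩, h]
    rfl
  · rw [coe_centerAut_pow_apply, h c c.2]
    rfl

theorem orderOf_centerAut {n : ℕ}
    (horder : IsLeast {m : ℕ | 0 < m ∧ ∀ z ∈ Subring.center D, (σ ^ m) z = z} n) :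
    orderOf (centerAut σ) = n := by
  simp only [← centerAut_pow_eq_one_iff] at horder
  exact (orderOf_eq_iff horder.1.1).2
    ⟨horder.1.2, fun m hm hpos h ↦ hm.not_ge (horder.2 ⟨hpos, h⟩)⟩

/-- The field `F = C ∩ Fix(σ)`, as a subfield of the center `C` of `D`. -/
abbrev fixedCenter : Subfield (Subring.center D) :=
  FixedPoints.subfield (Subgroup.zpowers (centerAut σ)) (Subring.center D)

theorem apply_algebraMap_fixedCenter (c : fixedCenter σ) :
    σ (algebraMap (fixedCenter σ) D c) = algebraMap (fixedCenter σ) D c :=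
  congrArg Subtype.val (mem_fixedPoints_zpowers_iff.1 c.2)

theorem mem_range_algebraMap_fixedCenter {z : D} (hz : z ∈ Subring.center D) (hσ : σ z = z) :
    z ∈ Set.range (algebraMap (fixedCenter σ) D) :=
  ⟨⟨⟨z, hz⟩, mem_fixedPoints_zpowers_iff.2 (Subtype.ext hσ)⟩, rfl⟩

theorem finrank_fixedCenter (hσ : IsOfFinOrder (centerAut σ)) :
    Module.finrank (fixedCenter σ) D =
      orderOf (centerAut σ) * Module.finrank (Subring.center D) D := by
  rw [← finrank_fixedPoints_zpowers hσ, Module.finrank_mul_finrank]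

end FixedCenter

section RightMultiplication

open Polynomial

theorem exists_ringHom_comp_eq {A B D : Type*} [Ring A] [Ring B] [Ring D] {j : B →+* D}
    (hj : Function.Injective j) (g : A →+* D) (hg : ∀ a, g a ∈ Set.range j) :
    ∃ κ : A →+* B, ∀ a, j (κ a) = g a := by
  let φ := RingEquiv.ofBijective j.rangeRestrict
    ⟨fun _ _ h ↦ hj (congrArg Subtype.val h), j.rangeRestrict_surjective⟩
  exact ⟨(φ.symm : j.range →+* B).comp (g.codRestrict j.range hg), fun a ↦
    congrArg Subtype.val (φ.apply_symm_apply ⟨g a, hg a⟩)⟩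

theorem exists_basis_of_existsUnique_sum {K V I : Type*} [Semiring K] [AddCommMonoid V] [Module K V]
    [Fintype I] {v : I → V} (hv : ∀ x, ∃! w : I → K, x = ∑ k, w k • v k) :
    ∃ e : Module.Basis I K V, ⇑e = v := by
  classical
  have hbij : Function.Bijective (Fintype.linearCombination K v) :=
    (Function.bijective_iff_existsUnique _).2 fun x ↦ by
      simpa only [Fintype.linearCombination_apply, eq_comm] using hv x
  refine ⟨.ofEquivFun (LinearEquiv.ofBijective _ hbij).symm, ?_⟩
  rw [Module.Basis.coe_ofEquivFun]
  ext i
  simp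

theorem exists_equiv_comp_eq {I J V : Type*} [Fintype I] [Fintype J] {w : J → V}
    (hw : Function.Injective w) (hcard : Fintype.card J = Fintype.card I) {v : I → V}
    (hv : ∀ k, ∃ i, v i = w k) : ∃ Q : J ≃ I, ∀ k, v (Q k) = w k := by
  choose q hq using hv
  have hinj : Function.Injective q := fun k l hkl ↦ hw (by rw [← hq, hkl, hq])
  exact ⟨.ofBijective q ((Fintype.bijective_iff_injective_and_card q).2 ⟨hinj, hcard⟩), hq⟩

namespace SkewPolynomialPresentation

variable {D R E J : Type*} [DivisionRing D] [Ring R] [Field E] [Module E D] [IsScalarTower E D D]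
  [Fintype J] [DecidableEq J] [Nonempty J] {σ : D ≃+* D} (S : SkewPolynomialPresentation σ R)
  {n : ℕ} {u : D} (h : IsInnerPower σ n u) (e : Module.Basis J E D)
  {f : R} {M : Matrix (J × Fin n) (J × Fin n) E[X]}

attribute [local instance] Polynomial.algebra in
theorem commute_det_and_natDegree_det {F : Type*} [Field F] [Algebra F D] [FiniteDimensional F D]
    [Algebra F E] [IsScalarTower F E D]
    (hfix : ∀ c, σ (algebraMap F D c) = algebraMap F D c)
    (hdvd : ∀ k, (∀ z ∈ Subring.center D, (σ ^ k) z = z) → n ∣ k)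
    (hfixed : ∀ z ∈ Subring.center D, σ z = z → z ∈ Set.range (algebraMap F D))
    (hfinrank : Module.finrank F D = n * (Fintype.card J * Fintype.card J)) (hf : f ≠ 0)
    (hM : ∀ i, S.ι (e i.1) * S.t ^ (i.2 : ℕ) * f =
      ∑ k, S.polyEval E h (M i k) * (S.ι (e k.1) * S.t ^ (k.2 : ℕ))) :
    (∀ g, Commute (S.polyEval E h M.det) g) ∧
      M.det.natDegree = Fintype.card J * S.natDegree f := by
  let : Algebra F[X] R := (S.polyEval F h).toAlgebra' (S.commute_polyEval h hfix)
  let : Module E[X] R := Module.compHom R (S.polyEval E h)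
  have : IsScalarTower E[X] R R := ⟨fun p ↦ mul_assoc (S.polyEval E h p)⟩
  have : IsScalarTower F[X] E[X] R := .of_algebraMap_smul fun p g ↦
    congrArg (· * g) (S.polyEval_map h p)
  have hmatrix : rightRegularMatrix F[X] (S.basis h (fun _ _ ↦ rfl) e) f = M :=
    rightRegularMatrix_eq_of_mul_eq_sum F[X] fun i ↦ by
      simp only [S.basis_apply]
      exact hM i
  rw [← hmatrix]
  exact ⟨S.commute_polyEval_reducedNorm F h _ e (fun _ ↦ rfl) hdvd hfixed hfinrank f,
    S.natDegree_reducedNorm F h _ e (fun _ ↦ rfl) hf⟩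

theorem commute_det_and_natDegree_det_of_isLeast
    (horder : IsLeast {m : ℕ | 0 < m ∧ ∀ z ∈ Subring.center D, (σ ^ m) z = z} n)
    (hcenter : ∀ z ∈ Subring.center D, ∃ a : E, a • (1 : D) = z)
    (hfinrank : Module.finrank (Subring.center D) D = Fintype.card J * Fintype.card J) (hf : f ≠ 0)
    (hM : ∀ i, S.ι (e i.1) * S.t ^ (i.2 : ℕ) * f =
      ∑ k, S.polyEval E h (M i k) * (S.ι (e k.1) * S.t ^ (k.2 : ℕ))) :
    (∀ g, Commute (S.polyEval E h M.det) g) ∧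
      M.det.natDegree = Fintype.card J * S.natDegree f := by
  let F := fixedCenter σ
  have horderOf := orderOf_centerAut σ horder
  have hfinrankF : Module.finrank F D = n * (Fintype.card J * Fintype.card J) := by
    rw [finrank_fixedCenter σ (orderOf_pos_iff.1 (horderOf ▸ h.pos)), horderOf, hfinrank]
  have : FiniteDimensional F D := .of_finrank_pos <| hfinrankF ▸
    Nat.mul_pos h.pos (Nat.mul_pos Fintype.card_pos Fintype.card_pos)
  obtain ⟨κ, hκ⟩ := exists_ringHom_comp_eq (RingHom.smulOneHom (R := E) (S := D)).injective
    (algebraMap F D) fun c ↦ hcenter _ (c : Subring.center D).2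
  let : Algebra F E := κ.toAlgebra
  have : IsScalarTower F E D := .of_algebraMap_smul fun c x ↦ by
    rw [Algebra.smul_def, ← hκ]
    exact (smul_one_mul (κ c) x).symm
  exact S.commute_det_and_natDegree_det h e (apply_algebraMap_fixedCenter σ)
    (fun k hk ↦ horderOf ▸ orderOf_dvd_of_pow_eq_one ((centerAut_pow_eq_one_iff σ).2 hk))
    (fun z ↦ mem_range_algebraMap_fixedCenter σ) hfinrankF hf hM

end SkewPolynomialPresentation

end RightMultiplication

/-- Let `D` be a central division algebra of degree `d` over `C` with a maximal
subfield `E` (`[E:C] = d`), `σ` an automorphism of `D` with `σ^n = i_u`,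
`u ∈ Fix(σ)`, `σ|_C` of order `n`, `F = C ∩ Fix(σ)`, and `N` the reduced norm of
`D(t;σ)` over `F(x)`, computed as the determinant of the left regular
representation on an `E(x)`-basis of size `dn`. Then for every `f ∈ D[t;σ]` of
degree `m`, `N(f) ∈ F[x]` and `deg_x N(f) = d·m`. -/
theorem norm_in_Fx_and_degree_dm
    (D : Type) [DivisionRing D] (d : ℕ) (hdpos : 0 < d)
    (hd : Module.finrank (Subring.center D) D = d * d)
    -- E, a maximal subfield of D of degree d over the center C:
    (E : Type) [Field E] (j : E →+* D)
    (hEC : ∀ z : D, z ∈ Subring.center D → z ∈ Set.range j)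
    (vE : Fin d → D)
    (hvE : ∀ x : D, ∃! w : Fin d → E, x = ∑ k : Fin d, j (w k) * vE k)
    (n : ℕ) (hn : 0 < n)
    (σ : D ≃+* D) (u : D) (hu0 : u ≠ 0) (hσu : σ u = u)
    (hinner : ∀ z : D, (σ ^ n) z = u * z * u⁻¹)
    (horder : IsLeast {m : ℕ | 0 < m ∧ ∀ z ∈ Subring.center D, (σ ^ m) z = z} n)
    -- R = D[t;σ]:
    (R : Type) [Ring R] (ι : D →+* R) (t : R)
    (hmul : ∀ a : D, t * ι a = ι (σ a) * t)
    (coeff : R →+ (ℕ →₀ D))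
    (hcoeff : ∀ (a : D) (i : ℕ), coeff (ι a * t ^ i) = Finsupp.single i a)
    (hrepr : ∀ x : R, (coeff x).sum (fun i a => ι a * t ^ i) = x)
    -- the left regular representation on the E(x)-basis {v_a t^i} of size dn,
    -- where x = u⁻¹t^n, and the reduced norm N = det ∘ ρ:
    (v : Fin (d * n) → R)
    (hv : ∀ (a : Fin d) (i : Fin n), ∃ k : Fin (d * n), v k = ι (vE a) * t ^ (i : ℕ))
    (ρ : R → Matrix (Fin (d * n)) (Fin (d * n)) (Polynomial E))
    (hρ : ∀ (g : R) (i : Fin (d * n)), v i * g =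
      ∑ k : Fin (d * n), ((ρ g i k).sum fun l a => ι (j a) * (ι u⁻¹ * t ^ n) ^ l) * v k)
    (N : R → Polynomial E) (hN : ∀ g : R, N g = (ρ g).det)
    (f : R) (m : ℕ) (hdeg : coeff f m ≠ 0 ∧ ∀ i : ℕ, m < i → coeff f i = 0) :
    (∀ k : ℕ, j ((N f).coeff k) ∈ Subring.center D ∧
      σ (j ((N f).coeff k)) = j ((N f).coeff k)) ∧
    (N f).natDegree = d * m := by
  let S : SkewPolynomialPresentation σ R := ⟨ι, t, hmul, coeff, hcoeff, hrepr⟩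
  have h : IsInnerPower σ n u := ⟨hn, hu0, hσu, hinner⟩
  have : NeZero d := ⟨hdpos.ne'⟩
  let : Module E D := Module.compHom D j
  have : IsScalarTower E D D := ⟨fun a ↦ mul_assoc (j a)⟩
  have hsmul (a : E) : a • (1 : D) = j a := mul_one (j a)
  obtain ⟨e, rfl⟩ := exists_basis_of_existsUnique_sum hvE
  obtain ⟨Q, hQ⟩ := exists_equiv_comp_eq (S.injective_ι_mul_t_pow e.injective e.ne_zero)
    (by simp) fun k ↦ hv k.1 k.2
  have hcenter (z : D) (hz : z ∈ Subring.center D) : ∃ a : E, a • (1 : D) = z :=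
    (hEC z hz).imp fun a ha ↦ (hsmul a).trans ha
  have hf : f ≠ 0 := fun hf ↦ hdeg.1 (by rw [hf, map_zero, Finsupp.zero_apply])
  have hM (i : Fin d × Fin n) : S.ι (e i.1) * S.t ^ (i.2 : ℕ) * f =
      ∑ k, S.polyEval E h ((ρ f).submatrix Q Q i k) * (S.ι (e k.1) * S.t ^ (k.2 : ℕ)) := by
    rw [← hQ, hρ, ← Q.sum_comp]
    simp only [S.polyEval_eq_sum, hsmul, hQ, Matrix.submatrix_apply]
    rfl
  obtain ⟨hcentral, hnatDegree⟩ :=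
    S.commute_det_and_natDegree_det_of_isLeast h e horder hcenter (by simpa using hd) hf hM
  rw [Matrix.det_submatrix_equiv_self, ← hN] at hcentral hnatDegree
  have hm := S.natDegree_eq_of_le_of_coeff_ne_zero (S.natDegree_le_iff.2 hdeg.2) hdeg.1
  refine ⟨fun k ↦ ?_, by rwa [hm, Fintype.card_fin] at hnatDegree⟩
  rw [← hsmul]
  exact ⟨S.coeff_smul_one_mem_center h hcentral k, S.map_coeff_smul_one h hcentral k⟩
end
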